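/- Let conditions A, B and H hold, with v_ε = p_ε^{−1}. Then: (i) f_ε^{−1} ν_ε(1) converges in distribution as ε → 0 to a random variable ν₀ exponentially distributed with parameter 1; (ii) condition I: f_ε → f₀ ∈ [0, ∞] as ε → 0 is necessary and sufficient for the convergence in distribution (with possibly improper limit) of ν_ε(1) (for some family of initial distributions in the necessity statement, for any family in the sufficiency statement), and in that case the limit is distributed as f₀ν₀; (iii) if f₀ = ∞ then ν_ε(t) → ∞ in probability as ε → 0, for every t > 0. -/

import Mathlib

open MeasureTheory Filter Set
open scoped Topology ENNReal

noncomputable section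

/-- Condition B: there exists a ring chain of states `c 0, c 1, …, c N = c 0`
containing all states of the phase space, with
`liminf_{ε→0+} p ε (c (k-1)) (c k) > 0` for `k = 1, …, N`. -/
def CondB {m : ℕ} (p : ℝ → Fin m → Fin m → ℝ) : Prop :=
  ∃ N : ℕ, 0 < N ∧ ∃ c : ℕ → Fin m, c N = c 0 ∧
    (∀ i : Fin m, ∃ k ≤ N, c k = i) ∧
    ∀ k < N, 0 < Filter.liminf (fun ε => p ε (c k) (c (k + 1))) (𝓝[>] (0 : ℝ))

/-- `π` is a stationary distribution of the transition matrix `p`. -/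
def IsStationaryDist {m : ℕ} (p : Fin m → Fin m → ℝ) (π : Fin m → ℝ) : Prop :=
  (∀ i, 0 ≤ π i) ∧ (∑ i, π i = 1) ∧ ∀ j, π j = ∑ i, π i * p i j

/-- `p_{ε,i} = P_i(ζ_{ε,1} = 1)`, the probability of occurrence of the rare event during
one transition step, starting from state `i`. -/
def rareP {m : ℕ} {Ω : Type} [MeasurableSpace Ω]
    (Pstart : ℝ → Fin m → Measure Ω) (ζ : ℝ → ℕ → Ω → Bool) (ε : ℝ) (i : Fin m) : ℝ :=
  (Pstart ε i {ω | ζ ε 1 ω = true}).toReal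

/-- `p_ε = Σ_i π_{ε,i} p_{ε,i}`, the stationary average of the rare-event probabilities. -/
def avgRare {m : ℕ} {Ω : Type} [MeasurableSpace Ω]
    (Pstart : ℝ → Fin m → Measure Ω) (ζ : ℝ → ℕ → Ω → Bool) (π : ℝ → Fin m → ℝ)
    (ε : ℝ) : ℝ :=
  ∑ i, π ε i * rareP Pstart ζ ε i

/-- `ν_ε = min{n ≥ 1 : ζ_{ε,n} = 1}`, the number of steps until the first rare event. -/
def nuRE {Ω : Type} (ζ : ℝ → ℕ → Ω → Bool) (ε : ℝ) (ω : Ω) : ℕ :=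
  sInf {n : ℕ | 1 ≤ n ∧ ζ ε n ω = true}

/-- The process `ν_ε(t) = Σ_{n=1}^{[t ν_ε]} f_{ε,η_{ε,n−1}}`. -/
def nuProc {m : ℕ} {Ω : Type} (η : ℝ → ℕ → Ω → Fin m) (ζ : ℝ → ℕ → Ω → Bool)
    (f : ℝ → Fin m → ℝ) (ε t : ℝ) (ω : Ω) : ℝ :=
  ∑ n ∈ Finset.Icc 1 (Nat.floor (t * (nuRE ζ ε ω : ℝ))), f ε (η ε (n - 1) ω)

/-- `f_ε = v_ε Σ_i π_{ε,i} f_{ε,i}` with `v_ε = p_ε⁻¹`. -/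
def fBarNu {m : ℕ} {Ω : Type} [MeasurableSpace Ω]
    (Pstart : ℝ → Fin m → Measure Ω) (ζ : ℝ → ℕ → Ω → Bool) (π : ℝ → Fin m → ℝ)
    (f : ℝ → Fin m → ℝ) (ε : ℝ) : ℝ :=
  (avgRare Pstart ζ π ε)⁻¹ * ∑ i, π ε i * f ε i


/-! ### Linear algebra along the ring -/

/-- stochastic matrix bounded below along a ring -/
structure RingMat {m : ℕ} (c : ℕ → Fin m) (a : ℝ) (p : Fin m → Fin m → ℝ) : Prop where
  nn : ∀ i j, 0 ≤ p i j
  sum : ∀ i, ∑ j, p i j = 1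
  ring : ∀ k, a ≤ p (c k) (c (k + 1))

lemma ring_osc {m : ℕ} {c : ℕ → Fin m} {L : ℕ} {a : ℝ} {p : Fin m → Fin m → ℝ}
    (hc : ∀ i k, ∃ n ≤ L, c (k + n) = i) (ha : 0 < a) (ha1 : a ≤ 1)
    (hp : RingMat c a p) (x : Fin m → ℝ) (κ : ℝ)
    (hx : ∀ i, |x i - ∑ j, p i j * x j| ≤ κ) (i j : Fin m) :
    |x i - x j| ≤ (L * (1 / a) ^ L) * κ := by
  have hκ : 0 ≤ κ := le_trans (abs_nonneg _) (hx i)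
  have hne : Nonempty (Fin m) := ⟨i⟩
  obtain ⟨i0, hi0⟩ := Finite.exists_max x
  obtain ⟨k0, -, hk0⟩ := hc i0 0
  have hA : 1 ≤ 1 / a := by rw [le_div_iff₀ ha]; linarith
  have key : ∀ n : ℕ, x i0 - x (c (0 + k0 + n)) ≤ (n * (1 / a) ^ n) * κ := by
    intro n
    induction n with
    | zero => rw [Nat.add_zero, hk0]; simp
    | succ n ih =>
      set k := 0 + k0 + n with hk
      have h1 : ∑ j, p (c k) j * (x i0 - x j) = x i0 - ∑ j, p (c k) j * x j := by
        simp only [mul_sub, Finset.sum_sub_distrib, ← Finset.sum_mul, hp.sum, one_mul]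
      have h2 : p (c k) (c (k+1)) * (x i0 - x (c (k+1))) ≤ ∑ j, p (c k) j * (x i0 - x j) :=
        Finset.single_le_sum (f := fun j => p (c k) j * (x i0 - x j))
          (fun j _ => mul_nonneg (hp.nn _ _) (by linarith [hi0 j])) (Finset.mem_univ _)
      have h3 : a * (x i0 - x (c (k+1))) ≤ p (c k) (c (k+1)) * (x i0 - x (c (k+1))) :=
        mul_le_mul_of_nonneg_right (hp.ring k) (by linarith [hi0 (c (k+1))])
      have h4 := (abs_le.1 (hx (c k))).2
      have h5 : a * (x i0 - x (c (k+1))) ≤ (n * (1 / a) ^ n) * κ + κ := by linarith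
      have h6 : x i0 - x (c (k+1)) ≤ ((n * (1 / a) ^ n) * κ + κ) * (1 / a) := by
        rw [mul_one_div, le_div_iff₀ ha]; linarith
      have h7 : (1:ℝ) / a ≤ (1 / a) ^ (n+1) := le_self_pow₀ hA (by omega)
      have : 0 + k0 + (n + 1) = k + 1 := by omega
      rw [this]
      refine h6.trans ?_
      push_cast
      have : ((n:ℝ) * (1 / a) ^ n * κ + κ) * (1 / a) = n * (1/a)^(n+1) * κ + κ * (1/a) := by ring
      rw [this]
      nlinarith [mul_le_mul_of_nonneg_left h7 hκ]
  have key2 : ∀ j, x i0 - x j ≤ (L * (1 / a) ^ L) * κ := by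
    intro j
    obtain ⟨n, hn, hj⟩ := hc j (0 + k0)
    rw [← hj]
    refine (key n).trans (mul_le_mul_of_nonneg_right ?_ hκ)
    have : (n:ℝ) ≤ L := by exact_mod_cast hn
    have h2 : (1 / a) ^ n ≤ (1 / a) ^ L := pow_le_pow_right₀ hA hn
    gcongr
  rw [abs_le]
  constructor <;> linarith [key2 i, key2 j, hi0 i, hi0 j]

lemma ring_pi {m : ℕ} {c : ℕ → Fin m} {L : ℕ} {a : ℝ} {p : Fin m → Fin m → ℝ}
    (hc : ∀ i k, ∃ n ≤ L, c (k + n) = i) (ha : 0 < a) (ha1 : a ≤ 1)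
    (hp : RingMat c a p) (π : Fin m → ℝ) (hπ : IsStationaryDist p π) (i : Fin m) :
    a ^ L / m ≤ π i := by
  have hne : Nonempty (Fin m) := ⟨i⟩
  have hm : (0:ℝ) < m := by exact_mod_cast (Fin.pos i)
  obtain ⟨hπ0, hπ1, hπs⟩ := hπ
  obtain ⟨i0, hi0⟩ := Finite.exists_max π
  have h1 : 1 ≤ m * π i0 := by
    rw [← hπ1]
    refine (Finset.sum_le_sum (fun i _ => hi0 i)).trans ?_
    simp
  obtain ⟨k0, -, hk0⟩ := hc i0 0
  have key : ∀ n : ℕ, a ^ n * π i0 ≤ π (c (0 + k0 + n)) := by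
    intro n
    induction n with
    | zero => rw [Nat.add_zero, hk0]; simp
    | succ n ih =>
      set k := 0 + k0 + n with hk
      have : 0 + k0 + (n + 1) = k + 1 := by omega
      rw [this, hπs (c (k+1))]
      have h2 : π (c k) * p (c k) (c (k+1)) ≤ ∑ i, π i * p i (c (k+1)) :=
        Finset.single_le_sum (f := fun j => π j * p j (c (k+1)))
          (fun j _ => mul_nonneg (hπ0 _) (hp.nn _ _)) (Finset.mem_univ _)
      refine le_trans ?_ h2
      have := mul_le_mul ih (hp.ring k) ha.le (hπ0 _)
      calc _ = a ^ n * π i0 * a := by ring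
        _ ≤ _ := this
  obtain ⟨n, hn, hj⟩ := hc i (0 + k0)
  rw [← hj]
  refine le_trans ?_ (key n)
  have h3 : a ^ L ≤ a ^ n := pow_le_pow_of_le_one ha.le ha1 hn
  rw [div_le_iff₀ hm]
  have : 0 < a ^ n := by positivity
  nlinarith

/-- the solution of `x = θ + Q x` is close to `T / D`. -/
lemma fixed_close {m : ℕ} {c : ℕ → Fin m} {L : ℕ} {a : ℝ} {p : Fin m → Fin m → ℝ}
    (hc : ∀ i k, ∃ n ≤ L, c (k + n) = i) (ha : 0 < a) (ha1 : a ≤ 1)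
    (hp : RingMat c a p) (π : Fin m → ℝ) (hπ : IsStationaryDist p π)
    (Q : Fin m → Fin m → ℝ) (hQp : ∀ i j, Q i j ≤ p i j)
    (θ x : Fin m → ℝ) (hθ : ∀ i, 0 ≤ θ i) (hx0 : ∀ i, 0 ≤ x i) (hx1 : ∀ i, x i ≤ 1)
    (hfix : ∀ i, x i = θ i + ∑ j, Q i j * x j)
    (κ : ℝ) (hκ : ∀ i, θ i + (1 - ∑ j, Q i j) ≤ κ)
    (D : ℝ) (hD : D = ∑ i, π i * (1 - ∑ j, Q i j)) (hD0 : 0 < D) (l : Fin m) :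
    |x l - (∑ i, π i * θ i) / D| ≤ (L * (1 / a) ^ L) * κ := by
  have hd : ∀ i, 1 - ∑ j, Q i j = ∑ j, (p i j - Q i j) := by
    intro i; rw [Finset.sum_sub_distrib, hp.sum]
  have hosc := ring_osc hc ha ha1 hp x κ (by
    intro i
    have h1 : x i - ∑ j, p i j * x j = θ i - ∑ j, (p i j - Q i j) * x j := by
      simp only [sub_mul, Finset.sum_sub_distrib]
      linarith [hfix i]
    have h2 : 0 ≤ ∑ j, (p i j - Q i j) * x j :=
      Finset.sum_nonneg (fun j _ => mul_nonneg (by linarith [hQp i j]) (hx0 j))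
    have h3 : ∑ j, (p i j - Q i j) * x j ≤ ∑ j, (p i j - Q i j) :=
      Finset.sum_le_sum (fun j _ => mul_le_of_le_one_right (by linarith [hQp i j]) (hx1 j))
    have h4 := hκ i
    rw [hd] at h4
    rw [h1, abs_le]
    constructor <;> linarith [hθ i])
  obtain ⟨hπ0, hπ1, hπs⟩ := hπ
  have hT : ∑ i, π i * θ i = ∑ i, ∑ j, π i * (p i j - Q i j) * x j := by
    have e1 : ∑ i, π i * x i = ∑ i, π i * θ i + ∑ i, ∑ j, π i * Q i j * x j := by
      rw [← Finset.sum_add_distrib]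
      refine Finset.sum_congr rfl (fun i _ => ?_)
      conv_lhs => rw [hfix i]
      rw [mul_add, Finset.mul_sum]
      simp only [mul_assoc]
    have e2 : ∑ i, π i * x i = ∑ i, ∑ j, π i * p i j * x j := by
      rw [Finset.sum_comm]
      refine Finset.sum_congr rfl (fun i _ => ?_)
      rw [← Finset.sum_mul, ← hπs i]
    simp only [mul_sub, sub_mul, Finset.sum_sub_distrib]
    linarith
  have hDD : D = ∑ i, ∑ j, π i * (p i j - Q i j) := by
    rw [hD]; refine Finset.sum_congr rfl (fun i _ => ?_)
    rw [hd, Finset.mul_sum]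
  have h1 : x l - (∑ i, π i * θ i) / D = (∑ i, ∑ j, π i * (p i j - Q i j) * (x l - x j)) / D := by
    have : ∑ i, ∑ j, π i * (p i j - Q i j) * (x l - x j) = D * x l - ∑ i, π i * θ i := by
      rw [hT, hDD]
      simp only [mul_sub (_ * _) , Finset.sum_sub_distrib, Finset.sum_mul]
    rw [this]; field_simp
  rw [h1, abs_div, abs_of_pos hD0, div_le_iff₀ hD0]
  refine (Finset.abs_sum_le_sum_abs _ _).trans ?_
  rw [hDD, Finset.mul_sum]
  refine Finset.sum_le_sum (fun i _ => (Finset.abs_sum_le_sum_abs _ _).trans ?_)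
  rw [Finset.mul_sum]
  refine Finset.sum_le_sum (fun j _ => ?_)
  have h0 : 0 ≤ π i * (p i j - Q i j) := mul_nonneg (hπ0 i) (by linarith [hQp i j])
  rw [abs_mul, abs_of_nonneg h0, mul_comm]
  exact mul_le_mul_of_nonneg_right (hosc l j) h0

/-! ### Path functionals for a fixed value of the parameter -/

/-- cylinder set -/
def CylS {m : ℕ} {Ω : Type} (η : ℕ → Ω → Fin m) (ζ : ℕ → Ω → Bool)
    (l : ℕ) (I : ℕ → Fin m) (Z : ℕ → Bool) : Set Ω :=
  {ω | ∀ k ≤ l, (η k ω = I k ∧ (1 ≤ k → ζ k ω = Z k))}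

/-- Markov renewal process, with nonnegative transition kernel -/
structure MRP {m : ℕ} {Ω : Type} [MeasurableSpace Ω] (η : ℕ → Ω → Fin m) (ζ : ℕ → Ω → Bool)
    (P : Fin m → Measure Ω) (R : Fin m → Fin m → Bool → ℝ) : Prop where
  prob : ∀ i, IsProbabilityMeasure (P i)
  meta_ : ∀ n, Measurable (η n)
  mzeta : ∀ n, Measurable (ζ n)
  nn : ∀ i j z, 0 ≤ R i j z
  law : ∀ n : ℕ, ∀ I : ℕ → Fin m, ∀ Z : ℕ → Bool, P (I 0) (CylS η ζ n I Z)
        = ENNReal.ofReal (∏ k ∈ Finset.Icc 1 n, R (I (k - 1)) (I k) (Z k))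

section fixedEps

variable {m : ℕ} {Ω : Type} [MeasurableSpace Ω] {η : ℕ → Ω → Fin m} {ζ : ℕ → Ω → Bool}
    {P : Fin m → Measure Ω} {R : Fin m → Fin m → Bool → ℝ}

lemma MRP.meas_cyl (h : MRP η ζ P R) (l : ℕ) (I : ℕ → Fin m) (Z : ℕ → Bool) :
    MeasurableSet (CylS η ζ l I Z) := by
  have : CylS η ζ l I Z = ⋂ k ∈ Finset.range (l+1), ({ω | η k ω = I k} ∩
      {ω | 1 ≤ k → ζ k ω = Z k}) := by
    ext ω; simp [CylS, Nat.lt_succ_iff]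
  rw [this]
  refine Finset.measurableSet_biInter _ (fun k _ => ?_)
  refine MeasurableSet.inter (h.meta_ k (measurableSet_singleton _)) ?_
  by_cases hk : 1 ≤ k
  · simp only [hk, true_imp_iff]; exact h.mzeta k (measurableSet_singleton _)
  · simp [hk]

lemma cyl_split (l : ℕ) (I : ℕ → Fin m) (Z : ℕ → Bool) (z : Bool) :
    CylS η ζ l I Z ∩ {ω | ζ (l+1) ω = z} =
      ⋃ j, CylS η ζ (l+1) (Function.update I (l+1) j) (Function.update Z (l+1) z) := by
  ext ω
  simp only [CylS, mem_inter_iff, mem_setOf_eq, mem_iUnion]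
  constructor
  · rintro ⟨h1, h2⟩
    refine ⟨η (l+1) ω, fun k hk => ?_⟩
    by_cases hk' : k = l+1
    · subst hk'; simp [h2]
    · simp only [Function.update_of_ne hk']
      exact h1 k (by omega)
  · rintro ⟨j, h⟩
    refine ⟨fun k hk => ?_, ?_⟩
    · have := h k (by omega)
      simpa only [Function.update_of_ne (show k ≠ l+1 by omega)] using this
    · have := (h (l+1) le_rfl).2 (by omega)
      simpa using this

lemma cyl_disj (l : ℕ) (I : ℕ → Fin m) (Z : ℕ → Bool) (z : Bool) :
    Pairwise (Function.onFun Disjoint fun j =>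
      CylS η ζ (l+1) (Function.update I (l+1) j) (Function.update Z (l+1) z)) := by
  intro j j' hj
  refine Set.disjoint_left.2 (fun ω h1 h2 => hj ?_)
  have e1 := (h1 (l+1) le_rfl).1
  have e2 := (h2 (l+1) le_rfl).1
  simp only [Function.update_self] at e1 e2
  rw [← e1, e2]

lemma MRP.step (h : MRP η ζ P R) (l : ℕ) (I : ℕ → Fin m) (Z : ℕ → Bool) (z : Bool) (j : Fin m) :
    P (I 0) (CylS η ζ (l+1) (Function.update I (l+1) j) (Function.update Z (l+1) z)) =
      P (I 0) (CylS η ζ l I Z) * ENNReal.ofReal (R (I l) j z) := by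
  have h1 := h.law (l+1) (Function.update I (l+1) j) (Function.update Z (l+1) z)
  rw [Function.update_of_ne (by omega)] at h1
  rw [h1, h.law, ← ENNReal.ofReal_mul (Finset.prod_nonneg (fun _ _ => h.nn _ _ _)),
    Finset.prod_Icc_succ_top (by omega)]
  congr 1
  congr 1
  · refine Finset.prod_congr rfl (fun k hk => ?_)
    rw [Finset.mem_Icc] at hk
    rw [Function.update_of_ne (by omega), Function.update_of_ne (by omega),
      Function.update_of_ne (by omega)]
  · simp

/-- path functional -/
def Vf (η : ℕ → Ω → Fin m) (ζ : ℕ → Ω → Bool) (w : Fin m → ℝ≥0∞) (H : ℕ → Ω → ℝ≥0∞) :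
    ℕ → ℕ → Ω → ℝ≥0∞
  | 0, l, ω => H l ω
  | n+1, l, ω => w (η l ω) * ({ω | ζ (l+1) ω = false}.indicator (Vf η ζ w H n (l+1)) ω)

/-- one-step operator -/
def Qop (R : Fin m → Fin m → Bool → ℝ) (w : Fin m → ℝ≥0∞) (u : Fin m → ℝ≥0∞) (i : Fin m) :
    ℝ≥0∞ := w i * ∑ j, ENNReal.ofReal (R i j false) * u j

lemma MRP.meas_V (h : MRP η ζ P R) (w : Fin m → ℝ≥0∞) (H : ℕ → Ω → ℝ≥0∞)
    (hH : ∀ l, Measurable (H l)) (n : ℕ) : ∀ l, Measurable (Vf η ζ w H n l) := by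
  induction n with
  | zero => exact hH
  | succ n ih =>
    intro l
    exact ((measurable_of_finite w).comp (h.meta_ l)).mul
      ((ih (l+1)).indicator (h.mzeta (l+1) (measurableSet_singleton _)))

lemma MRP.path (h : MRP η ζ P R) (w : Fin m → ℝ≥0∞) (H : ℕ → Ω → ℝ≥0∞) (v : Fin m → ℝ≥0∞)
    (hH : ∀ l, Measurable (H l))
    (hHv : ∀ l I Z, ∫⁻ ω in CylS η ζ l I Z, H l ω ∂(P (I 0)) = P (I 0) (CylS η ζ l I Z) * v (I l))
    (n : ℕ) : ∀ l I Z, ∫⁻ ω in CylS η ζ l I Z, Vf η ζ w H n l ω ∂(P (I 0)) =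
      P (I 0) (CylS η ζ l I Z) * ((Qop R w)^[n] v) (I l) := by
  induction n with
  | zero => exact hHv
  | succ n ih =>
    intro l I Z
    have hms := h.meas_cyl l I Z
    have e1 : ∫⁻ ω in CylS η ζ l I Z, Vf η ζ w H (n+1) l ω ∂(P (I 0)) =
        ∫⁻ ω in CylS η ζ l I Z, w (I l) *
          ({ω | ζ (l+1) ω = false}.indicator (Vf η ζ w H n (l+1)) ω) ∂(P (I 0)) := by
      refine setLIntegral_congr_fun hms (fun ω hω => ?_)
      simp only [Vf, (hω l le_rfl).1]
    have hmz : MeasurableSet {ω | ζ (l+1) ω = false} := h.mzeta (l+1) (measurableSet_singleton _)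
    rw [e1, lintegral_const_mul _ ((h.meas_V w H hH n (l+1)).indicator hmz),
      setLIntegral_indicator hmz, inter_comm, cyl_split,
      lintegral_iUnion (fun j => h.meas_cyl _ _ _) (cyl_disj _ _ _ _), tsum_fintype,
      Function.iterate_succ_apply']
    have e2 : ∀ j, ∫⁻ ω in CylS η ζ (l+1) (Function.update I (l+1) j)
        (Function.update Z (l+1) false), Vf η ζ w H n (l+1) ω ∂(P (I 0)) =
        P (I 0) (CylS η ζ l I Z) * (ENNReal.ofReal (R (I l) j false) * ((Qop R w)^[n] v) j) := by
      intro j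
      have := ih (l+1) (Function.update I (l+1) j) (Function.update Z (l+1) false)
      rw [Function.update_of_ne (by omega), h.step] at this
      rw [this, Function.update_self, mul_assoc]
    simp only [e2]
    rw [← Finset.mul_sum, Qop]
    ring

lemma MRP.path0 (h : MRP η ζ P R) (w : Fin m → ℝ≥0∞) (H : ℕ → Ω → ℝ≥0∞) (v : Fin m → ℝ≥0∞)
    (hH : ∀ l, Measurable (H l))
    (hHv : ∀ l I Z, ∫⁻ ω in CylS η ζ l I Z, H l ω ∂(P (I 0)) = P (I 0) (CylS η ζ l I Z) * v (I l))
    (n : ℕ) (i : Fin m) : ∫⁻ ω, Vf η ζ w H n 0 ω ∂(P i) = ((Qop R w)^[n] v) i := by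
  have h1 := h.path w H v hH hHv n 0 (fun _ => i) (fun _ => false)
  have h2 := h.law 0 (fun _ => i) (fun _ => false)
  simp only [Finset.Icc_eq_empty_of_lt Nat.zero_lt_one, Finset.prod_empty, ENNReal.ofReal_one]
    at h2
  have := h.prob i
  have h3 : ∀ᵐ ω ∂(P i), ω ∈ CylS η ζ 0 (fun _ => i) (fun _ => false) :=
    (prob_compl_eq_zero_iff (h.meas_cyl _ _ _)).2 h2
  rw [Measure.restrict_eq_self_of_ae_mem h3, h2, one_mul] at h1
  exact h1

/-- functional for the survival event -/
lemma MRP.survive (h : MRP η ζ P R) (w : Fin m → ℝ≥0∞) (n : ℕ) (i : Fin m) :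
    ∫⁻ ω, Vf η ζ w (fun _ _ => 1) n 0 ω ∂(P i) = ((Qop R w)^[n] (fun _ => 1)) i := by
  refine h.path0 w _ _ (fun _ => measurable_const) (fun l I Z => ?_) n i
  simp

lemma MRP.kill_aux (h : MRP η ζ P R) (z : Bool) (l : ℕ) (I : ℕ → Fin m) (Z : ℕ → Bool) :
    P (I 0) (CylS η ζ l I Z ∩ {ω | ζ (l+1) ω = z}) =
      P (I 0) (CylS η ζ l I Z) * ∑ j, ENNReal.ofReal (R (I l) j z) := by
  rw [cyl_split, measure_iUnion (cyl_disj _ _ _ _) (fun j => h.meas_cyl _ _ _), tsum_fintype,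
    Finset.mul_sum]
  exact Finset.sum_congr rfl (fun j _ => h.step _ _ _ _ _)

lemma MRP.kill (h : MRP η ζ P R) (w : Fin m → ℝ≥0∞) (n : ℕ) (i : Fin m) :
    ∫⁻ ω, Vf η ζ w (fun l ω => w (η l ω) * ({ω | ζ (l+1) ω = true}.indicator 1 ω)) n 0 ω ∂(P i)
      = ((Qop R w)^[n] (fun i => w i * ∑ j, ENNReal.ofReal (R i j true))) i := by
  have hmz : ∀ l, MeasurableSet {ω | ζ (l+1) ω = true} :=
    fun l => h.mzeta (l+1) (measurableSet_singleton _)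
  refine h.path0 w _ _ (fun l => ?_) (fun l I Z => ?_) n i
  · exact ((measurable_of_finite w).comp (h.meta_ l)).mul
      (measurable_one.indicator (hmz l))
  · have e1 : ∫⁻ ω in CylS η ζ l I Z, w (η l ω) * ({ω | ζ (l+1) ω = true}.indicator 1 ω) ∂(P (I 0))
      = ∫⁻ ω in CylS η ζ l I Z, w (I l) * ({ω | ζ (l+1) ω = true}.indicator 1 ω) ∂(P (I 0)) := by
      refine setLIntegral_congr_fun (h.meas_cyl _ _ _) (fun ω hω => ?_)
      simp only [(hω l le_rfl).1]
    rw [e1, lintegral_const_mul _ (measurable_one.indicator (hmz l)),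
      lintegral_indicator_one (hmz l), Measure.restrict_apply (hmz l), inter_comm, h.kill_aux]
    ring

lemma MRP.kill_one (h : MRP η ζ P R) (i : Fin m) (z : Bool) :
    P i {ω | ζ 1 ω = z} = ∑ j, ENNReal.ofReal (R i j z) := by
  have h1 := h.kill_aux z 0 (fun _ => i) (fun _ => false)
  have h2 := h.law 0 (fun _ => i) (fun _ => false)
  simp only [Finset.Icc_eq_empty_of_lt Nat.zero_lt_one, Finset.prod_empty, ENNReal.ofReal_one]
    at h2
  have := h.prob i
  rw [h2, one_mul] at h1
  rw [← h1]
  have h3 : ∀ᵐ ω ∂(P i), ω ∈ CylS η ζ 0 (fun _ => i) (fun _ => false) :=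
    (prob_compl_eq_zero_iff (h.meas_cyl _ _ _)).2 h2
  refine measure_congr ?_
  filter_upwards [h3] with ω hω
  apply propext
  exact ⟨fun h => ⟨hω, h⟩, fun h => h.2⟩

lemma MRP.kill_real (h : MRP η ζ P R) (i : Fin m) :
    (P i {ω | ζ 1 ω = true}).toReal = ∑ j, R i j true := by
  rw [h.kill_one, ← ENNReal.ofReal_sum_of_nonneg (fun j _ => h.nn _ _ _), ENNReal.toReal_ofReal]
  exact Finset.sum_nonneg (fun j _ => h.nn _ _ _)

lemma MRP.sum_one (h : MRP η ζ P R) (i : Fin m) :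
    ∑ j, (R i j false + R i j true) = 1 := by
  have := h.prob i
  have h1 : P i {ω | ζ 1 ω = false} + P i {ω | ζ 1 ω = true} = 1 := by
    have hm : MeasurableSet {ω | ζ 1 ω = true} := h.mzeta 1 (measurableSet_singleton _)
    have := prob_add_prob_compl (μ := P i) hm
    rw [add_comm, ← this]
    congr 2
    ext ω; simp
  rw [h.kill_one, h.kill_one, ← ENNReal.ofReal_sum_of_nonneg (fun j _ => h.nn _ _ _),
    ← ENNReal.ofReal_sum_of_nonneg (fun j _ => h.nn _ _ _),
    ← ENNReal.ofReal_add (Finset.sum_nonneg (fun j _ => h.nn _ _ _))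
      (Finset.sum_nonneg (fun j _ => h.nn _ _ _)), ENNReal.ofReal_eq_one,
      ← Finset.sum_add_distrib] at h1
  exact h1

/-- closed form of the path functional -/
lemma Vf_eq (w : Fin m → ℝ≥0∞) (H : ℕ → Ω → ℝ≥0∞) (n : ℕ) : ∀ (l : ℕ) (ω : Ω),
    (∀ k < n, ζ (l + k + 1) ω = false) →
    Vf η ζ w H n l ω = (∏ k ∈ Finset.range n, w (η (l + k) ω)) * H (l + n) ω := by
  induction n with
  | zero => intro l ω _; simp [Vf]
  | succ n ih =>
    intro l ω hω
    have h0 : ω ∈ {ω | ζ (l+1) ω = false} := hω 0 (by omega)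
    rw [Vf, indicator_of_mem h0, ih (l+1) ω, Finset.prod_range_succ', ← mul_assoc]
    · congr 1
      · rw [mul_comm]; congr 1
        refine Finset.prod_congr rfl (fun k _ => ?_)
        congr 2; omega
      · congr 1; omega
    · intro k hk
      have := hω (k+1) (by omega)
      rw [← this]; congr 1; omega

lemma Vf_zero (w : Fin m → ℝ≥0∞) (H : ℕ → Ω → ℝ≥0∞) (n : ℕ) : ∀ (l : ℕ) (ω : Ω),
    (¬ ∀ k < n, ζ (l + k + 1) ω = false) → Vf η ζ w H n l ω = 0 := by
  induction n with
  | zero => intro l ω h; exact absurd (fun k hk => absurd hk (by omega)) h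
  | succ n ih =>
    intro l ω hω
    rw [Vf]
    by_cases h0 : ω ∈ {ω | ζ (l+1) ω = false}
    · rw [indicator_of_mem h0, ih, mul_zero]
      intro hk
      apply hω
      intro k hk'
      rcases k with _ | k
      · exact h0
      · rw [← hk k (by omega)]; congr 1; omega
    · rw [indicator_of_notMem h0, mul_zero]

/-- waiting time, for fixed parameter -/
def nu1 (ζ : ℕ → Ω → Bool) (ω : Ω) : ℕ := sInf {n : ℕ | 1 ≤ n ∧ ζ n ω = true}

lemma nu1_succ (n : ℕ) (ω : Ω) :
    nu1 ζ ω = n + 1 ↔ (∀ k < n, ζ (k + 1) ω = false) ∧ ζ (n+1) ω = true := by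
  constructor
  · intro h
    have hne : {n : ℕ | 1 ≤ n ∧ ζ n ω = true}.Nonempty := by
      apply Nat.nonempty_of_pos_sInf
      unfold nu1 at h; omega
    have h1 := Nat.sInf_mem hne
    unfold nu1 at h
    rw [h] at h1
    refine ⟨fun k hk => ?_, h1.2⟩
    by_contra hc
    have := Nat.sInf_le (s := {n : ℕ | 1 ≤ n ∧ ζ n ω = true}) (m := k+1)
      ⟨by omega, by simpa using hc⟩
    omega
  · rintro ⟨h1, h2⟩
    unfold nu1
    have hmem : n+1 ∈ {n : ℕ | 1 ≤ n ∧ ζ n ω = true} := ⟨by omega, h2⟩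
    have hs := Nat.sInf_mem ⟨_, hmem⟩
    apply le_antisymm (Nat.sInf_le hmem)
    by_contra hlt
    have := h1 (sInf {n : ℕ | 1 ≤ n ∧ ζ n ω = true} - 1) (by have := hs.1; omega)
    rw [Nat.sub_add_cancel hs.1, hs.2] at this
    cases this

lemma nu1_zero (ω : Ω) : nu1 ζ ω = 0 ↔ ∀ k, ζ (k + 1) ω = false := by
  constructor
  · intro h k
    by_contra hc
    have hmem : k+1 ∈ {n : ℕ | 1 ≤ n ∧ ζ n ω = true} := ⟨by omega, by simpa using hc⟩
    have := (Nat.sInf_mem ⟨_, hmem⟩).1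
    unfold nu1 at h; omega
  · intro h
    have : {n : ℕ | 1 ≤ n ∧ ζ n ω = true} = ∅ := by
      ext n
      simp only [mem_setOf_eq, mem_empty_iff_false, iff_false, not_and]
      intro hn hz
      have := h (n-1)
      rw [Nat.sub_add_cancel hn, hz] at this
      cases this
    unfold nu1; rw [this]; simp

lemma MRP.meas_nu (h : MRP η ζ P R) : Measurable (nu1 ζ) := by
  refine measurable_to_countable' (fun n => ?_)
  rcases n with _ | n
  · have : nu1 ζ ⁻¹' {0} = ⋂ k, {ω | ζ (k+1) ω = false} := by
      ext ω; simp [nu1_zero]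
    rw [this]
    exact MeasurableSet.iInter (fun k => h.mzeta (k+1) (measurableSet_singleton _))
  · have : nu1 ζ ⁻¹' {n+1} = (⋂ k ∈ Finset.range n, {ω | ζ (k+1) ω = false}) ∩
        {ω | ζ (n+1) ω = true} := by
      ext ω; simp [nu1_succ]
    rw [this]
    exact (Finset.measurableSet_biInter _
      (fun k _ => h.mzeta (k+1) (measurableSet_singleton _))).inter
        (h.mzeta (n+1) (measurableSet_singleton _))

end fixedEps

section fixedEps2

variable {m : ℕ} {Ω : Type} [MeasurableSpace Ω] {η : ℕ → Ω → Fin m} {ζ : ℕ → Ω → Bool}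
    {P : Fin m → Measure Ω} {R : Fin m → Fin m → Bool → ℝ}

/-- resolvent series -/
def Yser (R : Fin m → Fin m → Bool → ℝ) (w v : Fin m → ℝ≥0∞) (e : ℝ≥0∞) (i : Fin m) : ℝ≥0∞ :=
  ∑' n : ℕ, e ^ n * ((Qop R w)^[n] v) i

lemma Yser_fix (R : Fin m → Fin m → Bool → ℝ) (w v : Fin m → ℝ≥0∞) (e : ℝ≥0∞) (i : Fin m) :
    Yser R w v e i = v i + e * (w i * ∑ j, ENNReal.ofReal (R i j false) * Yser R w v e j) := by
  unfold Yser
  rw [tsum_eq_zero_add' ENNReal.summable]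
  congr 1
  · simp
  · simp only [← ENNReal.tsum_mul_left]
    rw [← Summable.tsum_finsetSum (fun _ _ => ENNReal.summable), ← ENNReal.tsum_mul_left,
      ← ENNReal.tsum_mul_left]
    refine tsum_congr (fun n => ?_)
    rw [Function.iterate_succ_apply', Qop, pow_succ, Finset.mul_sum, Finset.mul_sum,
      Finset.mul_sum, Finset.mul_sum]
    refine Finset.sum_congr rfl (fun j _ => ?_)
    ring

/-- all standing assumptions for a fixed parameter -/
structure Setup (η : ℕ → Ω → Fin m) (ζ : ℕ → Ω → Bool) (P : Fin m → Measure Ω)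
    (R : Fin m → Fin m → Bool → ℝ) (c : ℕ → Fin m) (L : ℕ) (a : ℝ) (π : Fin m → ℝ) (δ : ℝ) :
    Prop where
  mrp : MRP η ζ P R
  hc : ∀ i k, ∃ n ≤ L, c (k + n) = i
  ha : 0 < a
  ha1 : a ≤ 1
  hring : ∀ k, a ≤ R (c k) (c (k+1)) false + R (c k) (c (k+1)) true
  hπ : IsStationaryDist (fun i j => R i j false + R i j true) π
  hδ : δ = ∑ i, π i * ∑ j, R i j true
  hδ0 : 0 < δ
  hδ1 : δ < 1

variable {c : ℕ → Fin m} {L : ℕ} {a : ℝ} {π : Fin m → ℝ} {δ : ℝ}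

lemma Setup.rm (S : Setup η ζ P R c L a π δ) :
    RingMat c a (fun i j => R i j false + R i j true) :=
  ⟨fun i j => add_nonneg (S.mrp.nn _ _ _) (S.mrp.nn _ _ _), S.mrp.sum_one, S.hring⟩

lemma Setup.sum0 (S : Setup η ζ P R c L a π δ) (i : Fin m) :
    ∑ j, R i j false = 1 - ∑ j, R i j true := by
  have := S.mrp.sum_one i
  rw [Finset.sum_add_distrib] at this
  linarith

lemma Setup.r_nn (S : Setup η ζ P R c L a π δ) (i : Fin m) : 0 ≤ ∑ j, R i j true :=
  Finset.sum_nonneg (fun j _ => S.mrp.nn _ _ _)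

lemma Setup.r_le (S : Setup η ζ P R c L a π δ) (i : Fin m) : ∑ j, R i j true ≤ 1 := by
  have := S.sum0 i
  have h : 0 ≤ ∑ j, R i j false := Finset.sum_nonneg (fun j _ => S.mrp.nn _ _ _)
  linarith

lemma Setup.b_pos (S : Setup η ζ P R c L a π δ) (i : Fin m) : 0 < a ^ L / m := by
  have hm : (0:ℝ) < m := by exact_mod_cast (Fin.pos i)
  have := S.ha
  positivity

/-- a component is bounded through the average -/
lemma Setup.comp_le (S : Setup η ζ P R c L a π δ) (u : Fin m → ℝ) (hu : ∀ i, 0 ≤ u i)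
    (i : Fin m) : u i ≤ (∑ i, π i * u i) / (a ^ L / m) := by
  rw [le_div_iff₀ (S.b_pos i)]
  have h1 := ring_pi S.hc S.ha S.ha1 S.rm π S.hπ i
  have h2 : π i * u i ≤ ∑ i, π i * u i :=
    Finset.single_le_sum (f := fun i => π i * u i)
      (fun j _ => mul_nonneg (S.hπ.1 j) (hu j)) (Finset.mem_univ _)
  nlinarith [mul_le_mul_of_nonneg_right h1 (hu i)]

lemma Setup.close (S : Setup η ζ P R c L a π δ) (θ d : Fin m → ℝ) (hθ : ∀ i, 0 ≤ θ i)
    (hd0 : ∀ i, 0 ≤ d i) (hd1 : ∀ i, d i ≤ 1) (Y : Fin m → ℝ≥0∞) (hY : ∀ i, Y i ≤ 1)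
    (hfix : ∀ i, Y i = ENNReal.ofReal (θ i) +
      ENNReal.ofReal (d i) * ∑ j, ENNReal.ofReal (R i j false) * Y j)
    (κ : ℝ) (hκ : ∀ i, θ i + (1 - d i * (1 - ∑ j, R i j true)) ≤ κ)
    (D : ℝ) (hD : D = ∑ i, π i * (1 - d i * (1 - ∑ j, R i j true))) (hD0 : 0 < D) (l : Fin m) :
    |(Y l).toReal - (∑ i, π i * θ i) / D| ≤ (L * (1 / a) ^ L) * κ := by
  have hYt : ∀ i, Y i ≠ ⊤ := fun i => ne_top_of_le_ne_top ENNReal.one_ne_top (hY i)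
  have hs : ∀ i, ∑ j, d i * R i j false = d i * (1 - ∑ j, R i j true) := by
    intro i; rw [← Finset.mul_sum, S.sum0]
  refine fixed_close S.hc S.ha S.ha1 S.rm π S.hπ (fun i j => d i * R i j false) ?_ θ
    (fun i => (Y i).toReal) hθ (fun i => ENNReal.toReal_nonneg) ?_ ?_ κ ?_ D ?_ hD0 l
  · intro i j
    have h1 := S.mrp.nn i j false
    have h2 := S.mrp.nn i j true
    have := mul_le_of_le_one_left h1 (hd1 i)
    linarith
  · intro i
    simpa using ENNReal.toReal_mono ENNReal.one_ne_top (hY i)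
  · intro i
    have h1 : Y i = ENNReal.ofReal (θ i + ∑ j, d i * R i j false * (Y j).toReal) := by
      rw [hfix i, ENNReal.ofReal_add (hθ i) (Finset.sum_nonneg (fun j _ => mul_nonneg
        (mul_nonneg (hd0 i) (S.mrp.nn _ _ _)) ENNReal.toReal_nonneg)),
        ENNReal.ofReal_sum_of_nonneg (fun j _ => mul_nonneg
        (mul_nonneg (hd0 i) (S.mrp.nn _ _ _)) ENNReal.toReal_nonneg), Finset.mul_sum]
      congr 1
      refine Finset.sum_congr rfl (fun j _ => ?_)
      rw [ENNReal.ofReal_mul (mul_nonneg (hd0 i) (S.mrp.nn _ _ _)), ENNReal.ofReal_mul (hd0 i),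
        ENNReal.ofReal_toReal (hYt j), mul_assoc]
    show (Y i).toReal = _
    conv_lhs => rw [h1]
    rw [ENNReal.toReal_ofReal]
    exact add_nonneg (hθ i) (Finset.sum_nonneg (fun j _ => mul_nonneg
        (mul_nonneg (hd0 i) (S.mrp.nn _ _ _)) ENNReal.toReal_nonneg))
  · intro i; rw [hs]; exact hκ i
  · simp only [hs]; exact hD

lemma Qop_mono (R : Fin m → Fin m → Bool → ℝ) (w : Fin m → ℝ≥0∞) : Monotone (Qop R w) := by
  intro u v huv i
  unfold Qop
  gcongr with j
  exact huv j

lemma Setup.Qop_one (S : Setup η ζ P R c L a π δ) (w : Fin m → ℝ≥0∞) (hw : ∀ i, w i ≤ 1) :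
    Qop R w (fun _ => 1) ≤ fun _ => 1 := by
  intro i
  unfold Qop
  simp only [mul_one]
  rw [← ENNReal.ofReal_sum_of_nonneg (fun j _ => S.mrp.nn _ _ _), S.sum0]
  refine mul_le_one' (hw i) ?_
  rw [ENNReal.ofReal_le_one]
  linarith [S.r_nn i]

lemma Setup.anti (S : Setup η ζ P R c L a π δ) (w : Fin m → ℝ≥0∞) (hw : ∀ i, w i ≤ 1) :
    Antitone (fun n : ℕ => (Qop R w)^[n] (fun _ => 1)) :=
  (Qop_mono R w).antitone_iterate_of_map_le (S.Qop_one w hw)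

/-- geometric resolvent, normalised: general bound. -/
lemma Setup.geom (S : Setup η ζ P R c L a π δ) (u : Fin m → ℝ) (hu : ∀ i, 0 ≤ u i)
    (r : ℝ) (hr0 : 0 < r) (hr1 : r < 1)
    (κ : ℝ) (hκ : ∀ i, 2 * r + u i + ∑ j, R i j true ≤ κ)
    (D : ℝ) (hD0 : 0 < D)
    (hD : D ≤ ∑ i, π i * (1 - (1 - r) * Real.exp (- u i) * (1 - ∑ j, R i j true))) (l : Fin m) :
    ENNReal.ofReal r * Yser R (fun i => ENNReal.ofReal (Real.exp (- u i))) (fun _ => 1)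
        (ENNReal.ofReal (1 - r)) l ≤
      ENNReal.ofReal (r / D + (L * (1 / a) ^ L) * κ) := by
  set w : Fin m → ℝ≥0∞ := fun i => ENNReal.ofReal (Real.exp (- u i)) with hw
  have hw1 : ∀ i, w i ≤ 1 := by
    intro i; rw [hw]; simp [hu i]
  set X : Fin m → ℝ≥0∞ := fun i =>
    ENNReal.ofReal r * Yser R w (fun _ => 1) (ENNReal.ofReal (1 - r)) i with hX
  have hr : ENNReal.ofReal r = 1 - ENNReal.ofReal (1 - r) := by
    rw [← ENNReal.ofReal_one, ← ENNReal.ofReal_sub _ (by linarith)]; congr 1; ring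
  have hX1 : ∀ i, X i ≤ 1 := by
    intro i
    have h1 : Yser R w (fun _ => 1) (ENNReal.ofReal (1 - r)) i ≤
        ∑' n : ℕ, (ENNReal.ofReal (1 - r)) ^ n := by
      refine ENNReal.tsum_le_tsum (fun n => ?_)
      refine mul_le_of_le_one_right (zero_le) ?_
      exact S.anti w hw1 (Nat.zero_le n) i
    rw [ENNReal.tsum_geometric, ← hr] at h1
    calc X i ≤ ENNReal.ofReal r * (ENNReal.ofReal r)⁻¹ := by
          simp only [hX]; gcongr
      _ = 1 := ENNReal.mul_inv_cancel (by simpa using hr0) ENNReal.ofReal_ne_top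
  have hexp : ∀ i, 0 < Real.exp (- u i) := fun i => Real.exp_pos _
  have hexp1 : ∀ i, Real.exp (- u i) ≤ 1 := fun i => by simp [hu i]
  have hexp2 : ∀ i, 1 - u i ≤ Real.exp (- u i) := fun i => by
    linarith [Real.add_one_le_exp (- u i)]
  have hd0 : ∀ i, 0 ≤ (1 - r) * Real.exp (- u i) :=
    fun i => mul_nonneg (by linarith) (hexp i).le
  have hd1 : ∀ i, (1 - r) * Real.exp (- u i) ≤ 1 :=
    fun i => mul_le_one₀ (by linarith) (hexp i).le (hexp1 i)
  have hcl := S.close (fun _ => r) (fun i => (1 - r) * Real.exp (- u i)) (fun _ => hr0.le)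
    hd0 hd1 X hX1 (by
      intro i
      simp only [hX]
      conv_lhs => rw [Yser_fix]
      rw [mul_add, mul_one, ENNReal.ofReal_mul (by linarith)]
      congr 1
      simp only [Finset.mul_sum]
      refine Finset.sum_congr rfl (fun j _ => ?_)
      ring) κ (by
      intro i
      refine le_trans ?_ (hκ i)
      have h1 := S.r_nn i
      have h2 := S.r_le i
      have h3 := hexp2 i
      have h4 := hexp1 i
      have h5 := hexp i
      set e := Real.exp (- u i)
      set q := ∑ j, R i j true
      have h6 : (1 - r) * e * q ≤ q := mul_le_of_le_one_left h1 (hd1 i)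
      have h7 : r * e ≤ r := mul_le_of_le_one_right hr0.le h4
      nlinarith) _ rfl (lt_of_lt_of_le hD0 hD) l
  have h1 := (abs_le.1 hcl).2
  have h2 : (∑ i, π i * r) = r := by rw [← Finset.sum_mul, S.hπ.2.1, one_mul]
  rw [h2] at h1
  have h3 : r / (∑ i, π i * (1 - (1 - r) * Real.exp (- u i) * (1 - ∑ j, R i j true))) ≤ r / D := by
    gcongr
  change X l ≤ _
  rw [← ENNReal.ofReal_toReal (ne_top_of_le_ne_top ENNReal.one_ne_top (hX1 l))]
  apply ENNReal.ofReal_le_ofReal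
  linarith

lemma MRP.nu_zero_le (h : MRP η ζ P R) (n : ℕ) (i : Fin m) :
    P i {ω | nu1 ζ ω = 0} ≤ ((Qop R (fun _ => 1))^[n] (fun _ => 1)) i := by
  rw [← h.survive (fun _ => 1) n i]
  have hm : MeasurableSet {ω | nu1 ζ ω = 0} := h.meas_nu (measurableSet_singleton _)
  rw [← lintegral_indicator_one hm]
  refine lintegral_mono (fun ω => ?_)
  by_cases hω : ω ∈ {ω | nu1 ζ ω = 0}
  · rw [indicator_of_mem hω, Vf_eq]
    · simp
    · intro k _
      rw [zero_add]
      exact (nu1_zero ω).1 hω k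
  · rw [indicator_of_notMem hω]; exact zero_le

lemma Setup.nu_zero (S : Setup η ζ P R c L a π δ) (i : Fin m) :
    P i {ω | nu1 ζ ω = 0} ≤
      ENNReal.ofReal (δ + (L * (1 / a) ^ L) * (2 * δ + δ / (a ^ L / m))) := by
  have hδ0 := S.hδ0
  have hδ1 := S.hδ1
  have hg := S.geom (fun _ => 0) (fun _ => le_rfl) (δ ^ 2) (by positivity) (by nlinarith)
    (2 * δ + δ / (a ^ L / m)) (by
      intro i
      have := S.comp_le _ S.r_nn i
      rw [← S.hδ] at this
      nlinarith) δ hδ0 (by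
      conv_lhs => rw [S.hδ]
      refine Finset.sum_le_sum (fun i _ => mul_le_mul_of_nonneg_left ?_ (S.hπ.1 i))
      have h1 := S.r_nn i
      have h2 := S.r_le i
      simp only [neg_zero, Real.exp_zero, mul_one]
      nlinarith [mul_nonneg (sq_nonneg δ) (sub_nonneg.2 h2)]) i
  have e : δ ^ 2 / δ = δ := by field_simp
  rw [e] at hg
  refine le_trans ?_ hg
  simp only [neg_zero, Real.exp_zero, ENNReal.ofReal_one]
  have h1 : ∑' n : ℕ, (ENNReal.ofReal (1 - δ ^ 2)) ^ n * P i {ω | nu1 ζ ω = 0} ≤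
      Yser R (fun _ => 1) (fun _ => 1) (ENNReal.ofReal (1 - δ ^ 2)) i := by
    refine ENNReal.tsum_le_tsum (fun n => ?_)
    gcongr
    exact S.mrp.nu_zero_le n i
  have hr : ENNReal.ofReal (δ ^ 2) = 1 - ENNReal.ofReal (1 - δ ^ 2) := by
    rw [← ENNReal.ofReal_one, ← ENNReal.ofReal_sub _ (by nlinarith)]; congr 1; ring
  rw [ENNReal.tsum_mul_right, ENNReal.tsum_geometric, ← hr] at h1
  calc P i {ω | nu1 ζ ω = 0} = ENNReal.ofReal (δ ^ 2) * ((ENNReal.ofReal (δ ^ 2))⁻¹ *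
        P i {ω | nu1 ζ ω = 0}) := by
        rw [← mul_assoc, ENNReal.mul_inv_cancel _ ENNReal.ofReal_ne_top, one_mul]
        simpa using hδ0.ne'
    _ ≤ _ := by gcongr

/-- survival estimate -/
lemma Setup.surv (S : Setup η ζ P R c L a π δ) (u : Fin m → ℝ) (hu : ∀ i, 0 ≤ u i)
    (s : ℝ) (hs : 0 < s) (hus : ∑ i, π i * u i = s * δ) (n : ℕ) (i : Fin m) :
    ENNReal.ofReal (1 - (1 - δ) ^ (n+1)) *
      ((Qop R (fun i => ENNReal.ofReal (Real.exp (- u i))))^[n] (fun _ => 1)) i ≤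
      ENNReal.ofReal (Real.exp (s * δ / (a ^ L / m)) / s +
        (L * (1 / a) ^ L) * (2 * δ + s * δ / (a ^ L / m) + δ / (a ^ L / m))) := by
  have hδ0 := S.hδ0
  have hδ1 := S.hδ1
  set γ := s * δ / (a ^ L / m) with hγ
  have hui : ∀ i, u i ≤ γ := by
    intro i
    have := S.comp_le u hu i
    rwa [hus] at this
  have hg := S.geom u hu δ hδ0 hδ1 (2 * δ + γ + δ / (a ^ L / m)) (by
      intro i
      have := S.comp_le _ S.r_nn i
      rw [← S.hδ] at this
      linarith [hui i]) (s * δ * Real.exp (- γ)) (by positivity) (by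
      rw [← hus, Finset.sum_mul]
      refine Finset.sum_le_sum (fun i _ => ?_)
      rw [mul_assoc]
      refine mul_le_mul_of_nonneg_left ?_ (S.hπ.1 i)
      have h1 := S.r_nn i
      have h2 := S.r_le i
      have h3 : Real.exp (-γ) ≤ Real.exp (- u i) := Real.exp_le_exp.2 (by linarith [hui i])
      have h4 : u i * Real.exp (- u i) ≤ 1 - Real.exp (- u i) := by
        have := Real.add_one_le_exp (u i)
        have h5 : Real.exp (u i) * Real.exp (- u i) = 1 := by rw [← Real.exp_add]; simp
        nlinarith [Real.exp_pos (- u i)]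
      have h6 : (1 - δ) * Real.exp (- u i) * (1 - ∑ j, R i j true) ≤ Real.exp (- u i) := by
        have : (1 - δ) * (1 - ∑ j, R i j true) ≤ 1 := mul_le_one₀ (by linarith) (by linarith)
          (by linarith)
        nlinarith [Real.exp_pos (- u i)]
      have h7 := mul_le_mul_of_nonneg_left h3 (hu i)
      linarith) i
  have e : δ / (s * δ * Real.exp (- γ)) = Real.exp γ / s := by
    rw [Real.exp_neg]; field_simp
  rw [e] at hg
  refine le_trans ?_ hg
  set w : Fin m → ℝ≥0∞ := fun i => ENNReal.ofReal (Real.exp (- u i)) with hw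
  have hw1 : ∀ i, w i ≤ 1 := by
    intro i; rw [hw]; simp [hu i]
  have h1 : ∑ k ∈ Finset.range (n+1), (ENNReal.ofReal (1 - δ)) ^ k * ((Qop R w)^[n] (fun _ => 1)) i
      ≤ Yser R w (fun _ => 1) (ENNReal.ofReal (1 - δ)) i := by
    refine le_trans ?_ (ENNReal.sum_le_tsum (Finset.range (n+1)))
    refine Finset.sum_le_sum (fun k hk => ?_)
    gcongr
    exact S.anti w hw1 (by rw [Finset.mem_range] at hk; omega) i
  have h2 : ENNReal.ofReal (1 - (1 - δ) ^ (n+1)) = ENNReal.ofReal δ *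
      ∑ k ∈ Finset.range (n+1), (ENNReal.ofReal (1 - δ)) ^ k := by
    simp only [← ENNReal.ofReal_pow (sub_nonneg.2 hδ1.le)]
    rw [← ENNReal.ofReal_sum_of_nonneg (fun k _ => pow_nonneg (sub_nonneg.2 hδ1.le) _),
      ← ENNReal.ofReal_mul hδ0.le]
    congr 1
    have := geom_sum_mul (1 - δ) (n+1)
    linarith
  rw [h2, mul_assoc, Finset.sum_mul]
  gcongr

end fixedEps2

section fixedEps3

variable {m : ℕ} {Ω : Type} [MeasurableSpace Ω] {η : ℕ → Ω → Fin m} {ζ : ℕ → Ω → Bool}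
    {P : Fin m → Measure Ω} {R : Fin m → Fin m → Bool → ℝ}
    {c : ℕ → Fin m} {L : ℕ} {a : ℝ} {π : Fin m → ℝ} {δ : ℝ}

/-- accumulated reward up to the rare event -/
def Sacc (η : ℕ → Ω → Fin m) (ζ : ℕ → Ω → Bool) (u : Fin m → ℝ) (ω : Ω) : ℝ :=
  ∑ k ∈ Finset.range (nu1 ζ ω), u (η k ω)

lemma exp_prod (u : Fin m → ℝ) (n : ℕ) (ω : Ω) :
    ENNReal.ofReal (Real.exp (-∑ k ∈ Finset.range n, u (η k ω))) =
      ∏ k ∈ Finset.range n, ENNReal.ofReal (Real.exp (- u (η k ω))) := by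
  rw [← Finset.sum_neg_distrib, Real.exp_sum,
    ENNReal.ofReal_prod_of_nonneg (fun _ _ => (Real.exp_pos _).le)]

lemma decomp_pt (u : Fin m → ℝ) (ω : Ω) :
    ENNReal.ofReal (Real.exp (- Sacc η ζ u ω)) = {ω | nu1 ζ ω = 0}.indicator 1 ω +
      ∑' n, Vf η ζ (fun i => ENNReal.ofReal (Real.exp (- u i)))
        (fun l ω => ENNReal.ofReal (Real.exp (- u (η l ω))) *
          ({ω | ζ (l+1) ω = true}.indicator 1 ω)) n 0 ω := by
  rcases hn : nu1 ζ ω with _ | n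
  · have h0 : ω ∈ {ω | nu1 ζ ω = 0} := hn
    rw [indicator_of_mem h0]
    have : ∀ n, Vf η ζ (fun i => ENNReal.ofReal (Real.exp (- u i)))
        (fun l ω => ENNReal.ofReal (Real.exp (- u (η l ω))) *
          ({ω | ζ (l+1) ω = true}.indicator 1 ω)) n 0 ω = 0 := by
      intro n
      have hz := (nu1_zero ω).1 hn
      rw [Vf_eq _ _ _ _ _ (fun k _ => by rw [zero_add]; exact hz k)]
      rw [indicator_of_notMem, mul_zero, mul_zero]
      simp [hz]
    simp [this, Sacc, hn]
  · have h0 : ω ∉ {ω | nu1 ζ ω = 0} := by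
      intro h
      have h : nu1 ζ ω = 0 := h
      omega
    obtain ⟨h1, h2⟩ := (nu1_succ n ω).1 hn
    rw [indicator_of_notMem h0, zero_add, tsum_eq_single n]
    · rw [Vf_eq _ _ _ _ _ (fun k hk => by rw [zero_add]; exact h1 k hk)]
      rw [indicator_of_mem (by simpa using h2), Sacc, hn, exp_prod, Finset.prod_range_succ]
      simp
    · intro n' hn'
      rcases lt_or_gt_of_ne hn' with hlt | hgt
      · rw [Vf_eq _ _ _ _ _ (fun k hk => by rw [zero_add]; exact h1 k (by omega))]
        rw [indicator_of_notMem, mul_zero, mul_zero]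
        simp [h1 n' hlt]
      · apply Vf_zero
        intro h
        have := h n hgt
        rw [zero_add, h2] at this
        cases this

lemma MRP.meas_kill (h : MRP η ζ P R) (w : Fin m → ℝ≥0∞) (l : ℕ) :
    Measurable (fun ω => w (η l ω) * ({ω | ζ (l+1) ω = true}.indicator 1 ω)) :=
  ((measurable_of_finite w).comp (h.meta_ l)).mul
    (measurable_one.indicator (h.mzeta (l+1) (measurableSet_singleton _)))

lemma MRP.meas_S (h : MRP η ζ P R) (u : Fin m → ℝ) : Measurable (Sacc η ζ u) := by
  have : Sacc η ζ u = (fun x : ℕ × Ω => ∑ k ∈ Finset.range x.1, u (η k x.2)) ∘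
      (fun ω => (nu1 ζ ω, ω)) := rfl
  rw [this]
  refine Measurable.comp (measurable_from_prod_countable_right (fun n => ?_))
    (h.meas_nu.prodMk measurable_id)
  exact Finset.measurable_fun_sum (Finset.range n)
    (fun k _ => (measurable_of_finite u).comp (h.meta_ k))

lemma MRP.meas_expS (h : MRP η ζ P R) (u : Fin m → ℝ) :
    Measurable (fun ω => Real.exp (- Sacc η ζ u ω)) :=
  Real.measurable_exp.comp (h.meas_S u).neg

lemma MRP.decomp (h : MRP η ζ P R) (u : Fin m → ℝ) (i : Fin m) :
    ∫⁻ ω, ENNReal.ofReal (Real.exp (- Sacc η ζ u ω)) ∂(P i) = P i {ω | nu1 ζ ω = 0} +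
      Yser R (fun i => ENNReal.ofReal (Real.exp (- u i)))
        (fun i => ENNReal.ofReal (Real.exp (- u i)) * ∑ j, ENNReal.ofReal (R i j true)) 1 i := by
  have hm : MeasurableSet {ω | nu1 ζ ω = 0} := h.meas_nu (measurableSet_singleton _)
  simp only [decomp_pt]
  rw [lintegral_add_left (measurable_one.indicator hm), lintegral_indicator_one hm,
    lintegral_tsum]
  · congr 1
    unfold Yser
    refine tsum_congr (fun n => ?_)
    rw [one_pow, one_mul]
    exact h.kill _ n i
  · intro n
    exact (h.meas_V _ _ (fun l => h.meas_kill
      (fun i => ENNReal.ofReal (Real.exp (- u i))) l) n 0).aemeasurable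

lemma Sacc_nonneg (u : Fin m → ℝ) (hu : ∀ i, 0 ≤ u i) (ω : Ω) : 0 ≤ Sacc η ζ u ω :=
  Finset.sum_nonneg (fun _ _ => hu _)

/-- two-sided estimate of the Laplace transform. -/
lemma Setup.lap (S : Setup η ζ P R c L a π δ) (u : Fin m → ℝ) (hu : ∀ i, 0 ≤ u i)
    (s : ℝ) (hs : 0 < s) (hus : ∑ i, π i * u i = s * δ) (l : Fin m) :
    Real.exp (- (s * δ / (a ^ L / m))) / (1 + s)
        - (L * (1 / a) ^ L) * ((s + 2) * δ / (a ^ L / m)) ≤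
      ∫ ω, Real.exp (- Sacc η ζ u ω) ∂(P l) ∧
    ∫ ω, Real.exp (- Sacc η ζ u ω) ∂(P l) ≤
      Real.exp (s * δ / (a ^ L / m)) / (1 + s)
        + (L * (1 / a) ^ L) * ((s + 2) * δ / (a ^ L / m))
        + (δ + (L * (1 / a) ^ L) * (2 * δ + δ / (a ^ L / m))) := by
  have hδ0 := S.hδ0
  have hδ1 := S.hδ1
  have hprob := S.mrp.prob
  have hb := S.b_pos l
  set γ := s * δ / (a ^ L / m) with hγ
  have hui : ∀ i, u i ≤ γ := by
    intro i
    have := S.comp_le u hu i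
    rwa [hus] at this
  have hri : ∀ i, ∑ j, R i j true ≤ δ / (a ^ L / m) := by
    intro i
    have := S.comp_le _ S.r_nn i
    rwa [← S.hδ] at this
  set w : Fin m → ℝ≥0∞ := fun i => ENNReal.ofReal (Real.exp (- u i)) with hw
  set v : Fin m → ℝ≥0∞ := fun i => w i * ∑ j, ENNReal.ofReal (R i j true) with hv
  have hdec := fun i => S.mrp.decomp u i
  have hle1 : ∀ i, ∫⁻ ω, ENNReal.ofReal (Real.exp (- Sacc η ζ u ω)) ∂(P i) ≤ 1 := by
    intro i
    calc _ ≤ ∫⁻ ω, 1 ∂(P i) := by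
          refine lintegral_mono (fun ω => ?_)
          simpa using Sacc_nonneg u hu ω
      _ = 1 := by simp
  have hY1 : ∀ i, Yser R w v 1 i ≤ 1 := by
    intro i
    refine le_trans ?_ (hle1 i)
    rw [hdec i]
    exact le_add_self
  have hexp : ∀ i, 0 < Real.exp (- u i) := fun i => Real.exp_pos _
  have hexp1 : ∀ i, Real.exp (- u i) ≤ 1 := fun i => by simp [hu i]
  have hexp2 : ∀ i, 1 - u i ≤ Real.exp (- u i) := fun i => by
    linarith [Real.add_one_le_exp (- u i)]
  have hexp3 : ∀ i, Real.exp (-γ) ≤ Real.exp (- u i) :=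
    fun i => Real.exp_le_exp.2 (by linarith [hui i])
  have hexp4 : ∀ i, u i * Real.exp (- u i) ≤ 1 - Real.exp (- u i) := by
    intro i
    have := Real.add_one_le_exp (u i)
    have h5 : Real.exp (u i) * Real.exp (- u i) = 1 := by rw [← Real.exp_add]; simp
    nlinarith [Real.exp_pos (- u i)]
  set T := ∑ i, π i * (Real.exp (- u i) * ∑ j, R i j true) with hT
  set D := ∑ i, π i * (1 - Real.exp (- u i) * (1 - ∑ j, R i j true)) with hD
  set E := ∑ i, π i * (1 - Real.exp (- u i)) with hE
  have hDE : D = E + T := by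
    rw [hD, hE, hT, ← Finset.sum_add_distrib]
    refine Finset.sum_congr rfl (fun i _ => ?_)
    ring
  have hπ0 := S.hπ.1
  have hT1 : T ≤ δ := by
    rw [S.hδ]
    refine Finset.sum_le_sum (fun i _ => mul_le_mul_of_nonneg_left ?_ (hπ0 i))
    exact mul_le_of_le_one_left (S.r_nn i) (hexp1 i)
  have hT2 : Real.exp (-γ) * δ ≤ T := by
    rw [S.hδ, Finset.mul_sum]
    refine Finset.sum_le_sum (fun i _ => ?_)
    rw [mul_left_comm]
    refine mul_le_mul_of_nonneg_left ?_ (hπ0 i)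
    exact mul_le_mul_of_nonneg_right (hexp3 i) (S.r_nn i)
  have hE1 : E ≤ s * δ := by
    rw [← hus]
    refine Finset.sum_le_sum (fun i _ => mul_le_mul_of_nonneg_left ?_ (hπ0 i))
    linarith [hexp2 i]
  have hE2 : Real.exp (-γ) * (s * δ) ≤ E := by
    rw [← hus, Finset.mul_sum]
    refine Finset.sum_le_sum (fun i _ => ?_)
    rw [mul_left_comm]
    refine mul_le_mul_of_nonneg_left ?_ (hπ0 i)
    have := mul_le_mul_of_nonneg_right (hexp3 i) (hu i)
    linarith [hexp4 i]
  have heγ : 0 < Real.exp (-γ) := Real.exp_pos _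
  have hTpos : 0 < T := lt_of_lt_of_le (by positivity) hT2
  have hDpos : 0 < D := by
    rw [hDE]
    have : 0 < E := lt_of_lt_of_le (by positivity) hE2
    linarith
  have hlow : Real.exp (-γ) / (1 + s) ≤ T / D := by
    rw [div_le_div_iff₀ (by linarith) hDpos]
    have h1 : D ≤ (1 + s) * δ := by rw [hDE]; linarith
    calc _ ≤ Real.exp (-γ) * ((1 + s) * δ) := by gcongr
      _ = (Real.exp (-γ) * δ) * (1 + s) := by ring
      _ ≤ _ := by gcongr
  have hup : T / D ≤ Real.exp γ / (1 + s) := by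
    rw [div_le_div_iff₀ hDpos (by linarith)]
    have h1 : Real.exp (-γ) * ((1 + s) * δ) ≤ D := by rw [hDE]; linarith
    have h2 : Real.exp γ * Real.exp (-γ) = 1 := by rw [← Real.exp_add]; simp
    calc T * (1 + s) ≤ δ * (1 + s) := by gcongr
      _ = (Real.exp γ * Real.exp (-γ)) * ((1 + s) * δ) := by rw [h2]; ring
      _ = Real.exp γ * (Real.exp (-γ) * ((1 + s) * δ)) := by ring
      _ ≤ _ := by gcongr
  have hcl := S.close (fun i => Real.exp (- u i) * ∑ j, R i j true) (fun i => Real.exp (- u i))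
    (fun i => mul_nonneg (hexp i).le (S.r_nn i)) (fun i => (hexp i).le) hexp1
    (Yser R w v 1) hY1 (by
      intro i
      conv_lhs => rw [Yser_fix]
      rw [one_mul, ENNReal.ofReal_mul (hexp i).le,
        ENNReal.ofReal_sum_of_nonneg (fun j _ => S.mrp.nn _ _ _)])
    ((s + 2) * δ / (a ^ L / m)) (by
      intro i
      have h1 := S.r_nn i
      have h3 := hexp2 i
      have h4 := hexp1 i
      have h5 := hri i
      have h6 : Real.exp (- u i) * ∑ j, R i j true ≤ ∑ j, R i j true :=
        mul_le_of_le_one_left h1 h4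
      have h7 := hui i
      have h8 : (s + 2) * δ / (a ^ L / m) = γ + 2 * (δ / (a ^ L / m)) := by rw [hγ]; ring
      rw [h8]
      nlinarith) D rfl hDpos l
  have hYt : Yser R w v 1 l ≠ ⊤ := ne_top_of_le_ne_top ENNReal.one_ne_top (hY1 l)
  have hintegral : ∫ ω, Real.exp (- Sacc η ζ u ω) ∂(P l) =
      (P l {ω | nu1 ζ ω = 0}).toReal + (Yser R w v 1 l).toReal := by
    rw [integral_eq_lintegral_of_nonneg_ae (Eventually.of_forall (fun _ => (Real.exp_pos _).le))
      (S.mrp.meas_expS u).aestronglyMeasurable, hdec l,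
      ENNReal.toReal_add (measure_ne_top _ _) hYt]
  have hnu : (P l {ω | nu1 ζ ω = 0}).toReal ≤
      δ + (L * (1 / a) ^ L) * (2 * δ + δ / (a ^ L / m)) := by
    have ha := S.ha
    refine ENNReal.toReal_le_of_le_ofReal (by positivity) (S.nu_zero l)
  have hnu0 : 0 ≤ (P l {ω | nu1 ζ ω = 0}).toReal := ENNReal.toReal_nonneg
  obtain ⟨h1, h2⟩ := abs_le.1 hcl
  rw [hintegral]
  constructor <;> linarith

/-- reward process -/
def Zt (η : ℕ → Ω → Fin m) (ζ : ℕ → Ω → Bool) (f : Fin m → ℝ) (t : ℝ) (ω : Ω) : ℝ :=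
  ∑ n ∈ Finset.Icc 1 (Nat.floor (t * (nu1 ζ ω : ℝ))), f (η (n - 1) ω)

lemma Icc_range (g : ℕ → ℝ) (n : ℕ) : ∑ k ∈ Finset.Icc 1 n, g (k - 1) =
    ∑ k ∈ Finset.range n, g k := by
  induction n with
  | zero => simp
  | succ n ih => rw [Finset.sum_Icc_succ_top (by omega), ih, Finset.sum_range_succ]; simp

lemma Zt_range (f : Fin m → ℝ) (t : ℝ) (ω : Ω) : Zt η ζ f t ω =
    ∑ k ∈ Finset.range (Nat.floor (t * (nu1 ζ ω : ℝ))), f (η k ω) :=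
  Icc_range (fun k => f (η k ω)) _

lemma Zt_one (f : Fin m → ℝ) (ω : Ω) : Zt η ζ f 1 ω = Sacc η ζ f ω := by
  rw [Zt_range, one_mul, Nat.floor_natCast]; rfl

lemma MRP.tail_split (h : MRP η ζ P R) (f : Fin m → ℝ) (hf : ∀ i, 0 ≤ f i) (t : ℝ) (ht : 0 < t)
    (x : ℝ) (n : ℕ) (y μ : ℝ) (hy : 0 ≤ y) (hμ : 0 ≤ μ) (i : Fin m) :
    (P i {ω | Zt η ζ f t ω ≤ x}) ≤
      ENNReal.ofReal (Real.exp (y * (n * (1 + 1 / t)))) *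
        ∫⁻ ω, ENNReal.ofReal (Real.exp (- Sacc η ζ (fun _ => y) ω)) ∂(P i)
      + ENNReal.ofReal (Real.exp (μ * x)) *
        ((Qop R (fun i => ENNReal.ofReal (Real.exp (- (μ * f i)))))^[n] (fun _ => 1)) i := by
  have hsub : {ω | Zt η ζ f t ω ≤ x} ⊆ {ω | (nu1 ζ ω : ℝ) ≤ n * (1 + 1 / t)} ∪
      {ω | (∀ k < n, ζ (k+1) ω = false) ∧ ∑ k ∈ Finset.range n, f (η k ω) ≤ x} := by
    intro ω hω
    by_cases hc : (nu1 ζ ω : ℝ) ≤ n * (1 + 1 / t)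
    · exact Or.inl hc
    · right
      push Not at hc
      have hn0 : (0:ℝ) ≤ n := Nat.cast_nonneg n
      have ht' : 0 < 1 / t := by positivity
      have h1 : (n:ℝ) < nu1 ζ ω := by nlinarith
      have h1' : n < nu1 ζ ω := by exact_mod_cast h1
      have h2 : (n:ℝ) ≤ t * nu1 ζ ω := by
        have : t * (n * (1 + 1 / t)) = n * t + n := by field_simp
        nlinarith
      have h3 : n ≤ Nat.floor (t * (nu1 ζ ω : ℝ)) := Nat.le_floor h2
      constructor
      · obtain ⟨N, hN⟩ : ∃ N, nu1 ζ ω = N + 1 := ⟨nu1 ζ ω - 1, by omega⟩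
        intro k hk
        exact ((nu1_succ N ω).1 hN).1 k (by omega)
      · refine le_trans ?_ (show Zt η ζ f t ω ≤ x from hω)
        rw [Zt_range]
        exact Finset.sum_le_sum_of_subset_of_nonneg (Finset.range_mono h3) (fun _ _ _ => hf _)
  refine (measure_mono hsub).trans ((measure_union_le _ _).trans (add_le_add ?_ ?_))
  · rw [← lintegral_const_mul _
      (h.meas_expS _).ennreal_ofReal]
    refine meas_le_lintegral₀ ((h.meas_expS _).ennreal_ofReal.const_mul _).aemeasurable (fun ω hω => ?_)
    have hω : (nu1 ζ ω : ℝ) ≤ n * (1 + 1 / t) := hω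
    show 1 ≤ ENNReal.ofReal _ * ENNReal.ofReal (Real.exp (- Sacc η ζ (fun _ => y) ω))
    rw [← ENNReal.ofReal_mul (Real.exp_pos _).le, ← Real.exp_add, ENNReal.one_le_ofReal,
      Real.one_le_exp_iff]
    simp only [Sacc, Finset.sum_const, Finset.card_range, nsmul_eq_mul]
    nlinarith [mul_le_mul_of_nonneg_left hω hy]
  · rw [← h.survive, ← lintegral_const_mul _ (h.meas_V _ _ (fun _ => measurable_const) n 0)]
    refine meas_le_lintegral₀ ((h.meas_V _ _ (fun _ => measurable_const)
      n 0).const_mul _).aemeasurable (fun ω hω => ?_)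
    obtain ⟨h1, h2⟩ := hω
    rw [Vf_eq _ _ _ _ _ (fun k hk => by rw [zero_add]; exact h1 k hk)]
    simp only [zero_add, mul_one]
    rw [← exp_prod (fun i => μ * f i), ← ENNReal.ofReal_mul (Real.exp_pos _).le, ← Real.exp_add,
      ENNReal.one_le_ofReal, Real.one_le_exp_iff, ← Finset.mul_sum]
    nlinarith [mul_le_mul_of_nonneg_left h2 hμ]

lemma Setup.tail (S : Setup η ζ P R c L a π δ) (f : Fin m → ℝ) (hf : ∀ i, 0 ≤ f i)
    (φ : ℝ) (hφ : 0 < φ) (hfφ : ∑ i, π i * f i = φ * δ) (t : ℝ) (ht : 0 < t)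
    (x : ℝ) (A y s : ℝ) (hA : 0 < A) (hy : 0 < y) (hs : 0 < s) (i : Fin m) :
    (P i {ω | Zt η ζ f t ω ≤ x}).toReal ≤
      Real.exp (y * (A * (1 + 1 / t))) * (Real.exp (y * δ / (a ^ L / m)) / (1 + y)
        + (L * (1 / a) ^ L) * ((y + 2) * δ / (a ^ L / m))
        + (δ + (L * (1 / a) ^ L) * (2 * δ + δ / (a ^ L / m))))
      + Real.exp (s * φ⁻¹ * x) * ((Real.exp (s * δ / (a ^ L / m)) / s +
        (L * (1 / a) ^ L) * (2 * δ + s * δ / (a ^ L / m) + δ / (a ^ L / m))) /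
          (1 - Real.exp (-A))) := by
  have hδ0 := S.hδ0
  have hδ1 := S.hδ1
  have ha := S.ha
  have hprob := S.mrp.prob
  set n := Nat.floor (A / δ) with hn
  have hn1 : n * δ ≤ A := by
    have := Nat.floor_le (show 0 ≤ A / δ by positivity)
    rwa [le_div_iff₀ hδ0] at this
  have hn2 : A ≤ (n + 1) * δ := by
    have := (Nat.lt_floor_add_one (A / δ)).le
    rwa [div_le_iff₀ hδ0] at this
  have h1 := S.mrp.tail_split f hf t ht x n (y * δ) (s * φ⁻¹) (by positivity) (by positivity) i
  have hsum : ∑ i, π i * (y * δ) = y * δ := by rw [← Finset.sum_mul, S.hπ.2.1, one_mul]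
  have h2 := (S.lap (fun _ => y * δ) (fun _ => by positivity) y hy hsum i).2
  have h3 := S.surv (fun i => s * φ⁻¹ * f i) (fun i => by have := hf i; positivity) s hs (by
    have : ∑ i, π i * (s * φ⁻¹ * f i) = s * φ⁻¹ * ∑ i, π i * f i := by
      rw [Finset.mul_sum]; exact Finset.sum_congr rfl (fun i _ => by ring)
    rw [this, hfφ]; field_simp) n i
  set B := ((Qop R (fun i => ENNReal.ofReal (Real.exp (- (s * φ⁻¹ * f i)))))^[n] (fun _ => 1)) i
    with hB
  have hB1 : B ≤ 1 := by
    refine S.anti (fun i => ENNReal.ofReal (Real.exp (- (s * φ⁻¹ * f i)))) ?_ (Nat.zero_le n) i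
    intro i
    have := hf i
    simp only [ENNReal.ofReal_le_one, Real.exp_le_one_iff]
    have : 0 ≤ s * φ⁻¹ * f i := by positivity
    linarith
  have hBt : B ≠ ⊤ := ne_top_of_le_ne_top ENNReal.one_ne_top hB1
  have hq : (1 - δ) ^ (n+1) ≤ Real.exp (-A) := by
    calc (1 - δ) ^ (n+1) ≤ (Real.exp (-δ)) ^ (n+1) := by
          refine pow_le_pow_left₀ (by linarith) ?_ _
          linarith [Real.add_one_le_exp (-δ)]
      _ = Real.exp (- ((n+1) * δ)) := by rw [← Real.exp_nat_mul]; congr 1; push_cast; ring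
      _ ≤ _ := Real.exp_le_exp.2 (by linarith)
  have hA1 : 0 < 1 - Real.exp (-A) := by
    have : Real.exp (-A) < 1 := by simpa using hA
    linarith
  have hB2 : B.toReal ≤ (Real.exp (s * δ / (a ^ L / m)) / s +
        (L * (1 / a) ^ L) * (2 * δ + s * δ / (a ^ L / m) + δ / (a ^ L / m))) /
          (1 - Real.exp (-A)) := by
    rw [le_div_iff₀ hA1]
    have h4 := ENNReal.toReal_le_of_le_ofReal (by positivity) h3
    rw [ENNReal.toReal_mul, ENNReal.toReal_ofReal (by linarith)] at h4
    nlinarith [ENNReal.toReal_nonneg (a := B)]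
  have hEt : ∫⁻ ω, ENNReal.ofReal (Real.exp (- Sacc η ζ (fun _ => y * δ) ω)) ∂(P i) ≠ ⊤ := by
    refine ne_top_of_le_ne_top ENNReal.one_ne_top ?_
    calc _ ≤ ∫⁻ ω, 1 ∂(P i) := by
          refine lintegral_mono (fun ω => ?_)
          simpa using Sacc_nonneg (fun _ => y * δ) (fun _ => by positivity) ω
      _ = 1 := by simp
  have h5 := ENNReal.toReal_mono (by
    exact ENNReal.add_ne_top.2 ⟨ENNReal.mul_ne_top ENNReal.ofReal_ne_top hEt,
      ENNReal.mul_ne_top ENNReal.ofReal_ne_top hBt⟩) h1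
  rw [ENNReal.toReal_add (ENNReal.mul_ne_top ENNReal.ofReal_ne_top hEt)
      (ENNReal.mul_ne_top ENNReal.ofReal_ne_top hBt), ENNReal.toReal_mul, ENNReal.toReal_mul,
      ENNReal.toReal_ofReal (Real.exp_pos _).le, ENNReal.toReal_ofReal (Real.exp_pos _).le,
      ← integral_eq_lintegral_of_nonneg_ae (Eventually.of_forall (fun _ => (Real.exp_pos _).le))
      (S.mrp.meas_expS _).aestronglyMeasurable] at h5
  refine h5.trans (add_le_add ?_ ?_)
  · refine mul_le_mul ?_ h2 (integral_nonneg (fun _ => (Real.exp_pos _).le)) (Real.exp_pos _).le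
    apply Real.exp_le_exp.2
    have : 0 < 1 + 1 / t := by positivity
    calc y * δ * (n * (1 + 1 / t)) = y * ((n * δ) * (1 + 1 / t)) := by ring
      _ ≤ _ := by gcongr
  · exact mul_le_mul_of_nonneg_left hB2 (Real.exp_pos _).le

end fixedEps3

/-! ### Asymptotics -/

lemma exists_lower (N : ℕ) (b : ℕ → ℝ) (hb : ∀ k < N, 0 < b k) :
    ∃ a : ℝ, 0 < a ∧ a ≤ 1 ∧ ∀ k < N, a ≤ b k := by
  induction N with
  | zero => exact ⟨1, one_pos, le_rfl, fun k hk => absurd hk (by omega)⟩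
  | succ N ih =>
    obtain ⟨a, ha, ha1, h⟩ := ih (fun k hk => hb k (by omega))
    refine ⟨min a (b N), lt_min ha (hb N (by omega)), (min_le_left _ _).trans ha1, ?_⟩
    intro k hk
    rcases Nat.lt_succ_iff_lt_or_eq.1 hk with h1 | h1
    · exact (min_le_left _ _).trans (h k h1)
    · subst h1; exact min_le_right _ _

lemma ring_exists {m : ℕ} (p : ℝ → Fin m → Fin m → ℝ) (hB : CondB p) :
    ∃ (c : ℕ → Fin m) (L : ℕ) (a : ℝ), 0 < a ∧ a ≤ 1 ∧ (∀ i k, ∃ n ≤ L, c (k + n) = i) ∧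
      ∀ᶠ ε in 𝓝[>] (0:ℝ), ∀ k, a ≤ p ε (c k) (c (k+1)) := by
  obtain ⟨N, hN, c, hcN, hcov, hlim⟩ := hB
  have h1 : ∀ k, ∃ b : ℝ, k < N → 0 < b ∧ ∀ᶠ ε in 𝓝[>] (0:ℝ), b ≤ p ε (c k) (c (k+1)) := by
    intro k
    by_cases hk : k < N
    · have h := hlim k hk
      rw [Filter.liminf_eq] at h
      have hne : {b | ∀ᶠ ε in 𝓝[>] (0:ℝ), b ≤ p ε (c k) (c (k+1))}.Nonempty := by
        by_contra hne
        rw [Set.not_nonempty_iff_eq_empty] at hne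
        rw [hne, Real.sSup_empty] at h
        exact lt_irrefl _ h
      obtain ⟨b, hb, hb0⟩ := exists_lt_of_lt_csSup hne h
      exact ⟨b, fun _ => ⟨hb0, hb⟩⟩
    · exact ⟨0, fun h => absurd h hk⟩
  choose b hb using h1
  obtain ⟨a, ha, ha1, hab⟩ := exists_lower N b (fun k hk => (hb k hk).1)
  refine ⟨fun k => c (k % N), 2 * N, a, ha, ha1, ?_, ?_⟩
  · intro i K
    obtain ⟨k, hk, hki⟩ := hcov i
    have hlt : K % N < N := Nat.mod_lt _ hN
    have hlt' : k % N < N := Nat.mod_lt _ hN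
    refine ⟨k % N + N - K % N, by omega, ?_⟩
    have e : K + (k % N + N - K % N) = k % N + N * (K / N + 1) := by
      have := Nat.div_add_mod K N
      rw [mul_add, mul_one]
      omega
    show c ((K + (k % N + N - K % N)) % N) = i
    rw [e, Nat.add_mul_mod_self_left, Nat.mod_mod, ← hki]
    rcases hk.lt_or_eq with h | h
    · rw [Nat.mod_eq_of_lt h]
    · rw [h, Nat.mod_self, hcN]
  · have : ∀ᶠ ε in 𝓝[>] (0:ℝ), ∀ k ∈ Finset.range N, b k ≤ p ε (c k) (c (k+1)) := by
      rw [Filter.eventually_all_finset]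
      intro k hk
      exact (hb k (Finset.mem_range.1 hk)).2
    filter_upwards [this] with ε hε k
    have hlt : k % N < N := Nat.mod_lt _ hN
    have h2 := (hab _ hlt).trans (hε (k % N) (Finset.mem_range.2 hlt))
    have e : c ((k+1) % N) = c (k % N + 1) := by
      rw [Nat.add_mod]
      by_cases h1 : N = 1
      · subst h1; simp [Nat.mod_one, hcN]
      · rw [Nat.mod_eq_of_lt (show 1 < N by omega)]
        rcases (show k % N + 1 ≤ N by omega).lt_or_eq with h | h
        · rw [Nat.mod_eq_of_lt h]
        · rw [h, Nat.mod_self, hcN]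
    show a ≤ p ε (c (k % N)) (c ((k+1) % N))
    rw [e]; exact h2

lemma R_nonneg {m : ℕ} {Ω : Type} [MeasurableSpace Ω] {η : ℕ → Ω → Fin m} {ζ : ℕ → Ω → Bool}
    {P : Fin m → Measure Ω} {R : Fin m → Fin m → Bool → ℝ} {c : ℕ → Fin m} {L : ℕ}
    (hlaw : ∀ n : ℕ, ∀ I : ℕ → Fin m, ∀ Z : ℕ → Bool, P (I 0) (CylS η ζ n I Z)
        = ENNReal.ofReal (∏ k ∈ Finset.Icc 1 n, R (I (k - 1)) (I k) (Z k)))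
    (hc : ∀ i k, ∃ n ≤ L, c (k + n) = i)
    (hpos : ∀ k, 0 < R (c k) (c (k+1)) false + R (c k) (c (k+1)) true)
    (i j : Fin m) (z : Bool) : 0 ≤ R i j z := by
  by_contra hneg
  push Not at hneg
  have hz : ∀ k, ∃ z, 0 < R (c k) (c (k+1)) z := by
    intro k
    by_contra h
    push Not at h
    linarith [h false, h true, hpos k]
  choose zc hzc using hz
  obtain ⟨k1, -, hk1⟩ := hc j 0
  rw [zero_add] at hk1
  obtain ⟨n, -, hn⟩ := hc i k1
  set I : ℕ → Fin m := fun k => if k = 0 then i else if k = n + 2 then j else c (k1 + (k - 1))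
    with hI
  set Z : ℕ → Bool := fun k => if k = 1 ∨ k = n + 2 then z else zc (k1 + (k - 2)) with hZ
  have hI0 : I 0 = i := by simp [hI]
  have hI1 : I 1 = j := by simp [hI, hk1]
  have hIn1 : I (n+1) = i := by simp [hI, hn]
  have hIn2 : I (n+2) = j := by simp [hI]
  have hZ1 : Z 1 = z := by simp [hZ]
  have hZn2 : Z (n+2) = z := by simp [hZ]
  have e1 := hlaw 1 I Z
  have e2 := hlaw (n+2) I Z
  have hsub : CylS η ζ (n+2) I Z ⊆ CylS η ζ 1 I Z := fun ω hω k hk => hω k (by omega)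
  have hle := measure_mono (μ := P (I 0)) hsub
  rw [e1, e2] at hle
  simp only [Finset.Icc_self, Finset.prod_singleton, Nat.sub_self, hI0, hI1, hZ1] at hle
  rw [ENNReal.ofReal_of_nonpos hneg.le, nonpos_iff_eq_zero, ENNReal.ofReal_eq_zero] at hle
  have e3 : ∏ k ∈ Finset.Icc 1 (n+2), R (I (k-1)) (I k) (Z k) =
      (∏ k ∈ Finset.range n, R (I (k+1)) (I (k+2)) (Z (k+2))) * R i j z * R i j z := by
    have : ∀ N, ∏ k ∈ Finset.Icc 1 N, R (I (k-1)) (I k) (Z k) =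
        ∏ k ∈ Finset.range N, R (I k) (I (k+1)) (Z (k+1)) := by
      intro N
      induction N with
      | zero => simp
      | succ N ih => rw [Finset.prod_Icc_succ_top (by omega), ih, Finset.prod_range_succ]; simp
    rw [this, Finset.prod_range_succ, Finset.prod_range_succ', hIn1, hIn2, hZn2, hI0, zero_add,
      hI1, hZ1]
  rw [e3] at hle
  have h4 : 0 < ∏ k ∈ Finset.range n, R (I (k+1)) (I (k+2)) (Z (k+2)) := by
    refine Finset.prod_pos (fun k hk => ?_)
    rw [Finset.mem_range] at hk
    have a1 : I (k+1) = c (k1 + k) := by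
      simp only [hI]; rw [if_neg (by omega), if_neg (by omega)]; congr 1
    have a2 : I (k+2) = c (k1 + k + 1) := by
      simp only [hI]; rw [if_neg (by omega), if_neg (by omega)]; congr 1
    have a3 : Z (k+2) = zc (k1 + k) := by
      simp only [hZ]; rw [if_neg (by omega)]; congr 1
    rw [a1, a2, a3]; exact hzc _
  have h5 : 0 < R i j z * R i j z := mul_pos_of_neg_of_neg hneg hneg
  nlinarith [mul_pos h4 h5]

lemma mix_tendsto {m : ℕ} {l : Filter ℝ} (q F : ℝ → Fin m → ℝ) (y : ℝ)
    (hq : ∀ᶠ ε in l, (∀ i, 0 ≤ q ε i) ∧ ∑ i, q ε i = 1)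
    (hF : ∀ i, Tendsto (fun ε => F ε i) l (𝓝 y)) :
    Tendsto (fun ε => ∑ i, q ε i * F ε i) l (𝓝 y) := by
  rw [tendsto_iff_norm_sub_tendsto_zero]
  have h1 : Tendsto (fun ε => ∑ i, |F ε i - y|) l (𝓝 0) := by
    rw [show (0:ℝ) = ∑ i : Fin m, (0:ℝ) by simp]
    refine tendsto_finset_sum _ (fun i _ => ?_)
    have := (tendsto_iff_norm_sub_tendsto_zero.1 (hF i))
    simpa [Real.norm_eq_abs] using this
  refine squeeze_zero' (Eventually.of_forall (fun _ => norm_nonneg _)) ?_ h1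
  filter_upwards [hq] with ε ⟨h0, hs⟩
  have e : ∑ i, q ε i * F ε i - y = ∑ i, q ε i * (F ε i - y) := by
    simp only [mul_sub, Finset.sum_sub_distrib, ← Finset.sum_mul, hs, one_mul]
  rw [e, Real.norm_eq_abs]
  refine (Finset.abs_sum_le_sum_abs _ _).trans (Finset.sum_le_sum (fun i _ => ?_))
  rw [abs_mul, abs_of_nonneg (h0 i)]
  refine mul_le_of_le_one_left (abs_nonneg _) ?_
  rw [← hs]
  exact Finset.single_le_sum (fun j _ => h0 j) (Finset.mem_univ i)

lemma gconv_aux {l : Filter ℝ} (G : ℝ → ℝ → ℝ) (φ : ℝ → ℝ) (y : ℝ≥0∞)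
    (hpos : ∀ᶠ ε in l, 0 < φ ε)
    (hanti : ∀ᶠ ε in l, ∀ s s', 0 < s → s ≤ s' → G ε s' ≤ G ε s)
    (h0 : ∀ᶠ ε in l, ∀ s > 0, 0 ≤ G ε s ∧ G ε s ≤ 1)
    (hG : ∀ s > 0, Tendsto (fun ε => G ε s) l (𝓝 (1 / (1 + s))))
    (hφ : Tendsto (fun ε => ENNReal.ofReal (φ ε)) l (𝓝 y)) :
    Tendsto (fun ε => G ε (φ ε)) l (𝓝 (((1 + y)⁻¹).toReal)) := by
  have hcont : ContinuousOn (fun s : ℝ => 1 / (1 + s)) (Set.Ici 0) := by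
    refine ContinuousOn.div continuousOn_const (by fun_prop) (fun s hs => ?_)
    have : (0:ℝ) ≤ s := hs
    positivity
  have hval : y ≠ ⊤ → ((1 + y)⁻¹).toReal = 1 / (1 + y.toReal) := by
    intro hy
    rw [ENNReal.toReal_inv, ENNReal.toReal_add ENNReal.one_ne_top hy]; simp
  rw [tendsto_order]
  constructor
  · intro b hb
    by_cases hy : y = ⊤
    · subst hy
      simp at hb
      filter_upwards [hpos, h0] with ε h1 h2
      exact lt_of_lt_of_le hb (h2 _ h1).1
    · rw [hval hy] at hb
      have hc : ContinuousAt (fun s : ℝ => 1 / (1 + s)) y.toReal := by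
        refine ContinuousAt.div continuousAt_const (by fun_prop) ?_
        have : 0 ≤ y.toReal := ENNReal.toReal_nonneg
        positivity
      have h1 : ∀ᶠ s in 𝓝[>] y.toReal, b < 1 / (1 + s) :=
        (hc.eventually (lt_mem_nhds hb)).filter_mono nhdsWithin_le_nhds
      obtain ⟨s, hs1, hs2⟩ := (h1.and self_mem_nhdsWithin).exists
      have hs2 : y.toReal < s := hs2
      have hs0 : 0 < s := lt_of_le_of_lt ENNReal.toReal_nonneg hs2
      have hys : y < ENNReal.ofReal s := by
        rwa [ENNReal.lt_ofReal_iff_toReal_lt hy]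
      filter_upwards [hφ.eventually (gt_mem_nhds hys), hpos, hanti,
        (hG s hs0).eventually (lt_mem_nhds hs1)] with ε a1 a2 a3 a4
      have := (ENNReal.ofReal_lt_ofReal_iff hs0).1 a1
      exact lt_of_lt_of_le a4 (a3 _ _ a2 this.le)
  · intro b hb
    by_cases hy0 : y = 0
    · subst hy0
      simp at hb
      filter_upwards [hpos, h0] with ε h1 h2
      exact lt_of_le_of_lt (h2 _ h1).2 hb
    · obtain ⟨s, hs0, hsy, hsb⟩ : ∃ s : ℝ, 0 < s ∧ ENNReal.ofReal s < y ∧ 1 / (1 + s) < b := by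
        by_cases hy : y = ⊤
        · subst hy
          simp at hb
          refine ⟨1 / b, by positivity, ENNReal.ofReal_lt_top, ?_⟩
          rw [div_lt_iff₀ (by positivity), mul_add, mul_one_div_cancel hb.ne']
          linarith
        · rw [hval hy] at hb
          have hyp : 0 < y.toReal := ENNReal.toReal_pos hy0 hy
          have hc : ContinuousAt (fun s : ℝ => 1 / (1 + s)) y.toReal := by
            refine ContinuousAt.div continuousAt_const (by fun_prop) ?_
            positivity
          have h1 : ∀ᶠ s in 𝓝[<] y.toReal, 1 / (1 + s) < b :=
            (hc.eventually (gt_mem_nhds hb)).filter_mono nhdsWithin_le_nhds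
          have h2 : ∀ᶠ s in 𝓝[<] y.toReal, 0 < s :=
            (lt_mem_nhds hyp).filter_mono nhdsWithin_le_nhds
          obtain ⟨s, ⟨hs1, hs3⟩, hs2⟩ := ((h1.and h2).and self_mem_nhdsWithin).exists
          refine ⟨s, hs3, ?_, hs1⟩
          rw [ENNReal.ofReal_lt_iff_lt_toReal hs3.le hy]
          exact hs2
      filter_upwards [hφ.eventually (lt_mem_nhds hsy), hpos, hanti,
        (hG s hs0).eventually (gt_mem_nhds hsb)] with ε a1 a2 a3 a4
      have := (ENNReal.ofReal_lt_ofReal_iff a2).1 a1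
      exact lt_of_le_of_lt (a3 _ _ hs0 this.le) a4

lemma gconv {l : Filter ℝ} (G : ℝ → ℝ → ℝ) (φ : ℝ → ℝ) (y : ℝ≥0∞)
    (hpos : ∀ᶠ ε in l, 0 < φ ε)
    (hanti : ∀ᶠ ε in l, ∀ s s', 0 < s → s ≤ s' → G ε s' ≤ G ε s)
    (h0 : ∀ᶠ ε in l, ∀ s > 0, 0 ≤ G ε s ∧ G ε s ≤ 1)
    (hG : ∀ s > 0, Tendsto (fun ε => G ε s) l (𝓝 (1 / (1 + s))))
    (hφ : Tendsto (fun ε => ENNReal.ofReal (φ ε)) l (𝓝 y)) (s : ℝ) (hs : 0 < s) :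
    Tendsto (fun ε => G ε (s * φ ε)) l (𝓝 (((1 + ENNReal.ofReal s * y)⁻¹).toReal)) := by
  refine gconv_aux G (fun ε => s * φ ε) _ ?_ hanti h0 hG ?_
  · filter_upwards [hpos] with ε h; positivity
  · simp only [ENNReal.ofReal_mul hs.le]
    exact ENNReal.Tendsto.const_mul hφ (Or.inr ENNReal.ofReal_ne_top)


/-! ### Final assembly -/

lemma setup_eventually {m : ℕ} (ε₀ : ℝ) (hε₀ : 0 < ε₀)
    {Ω : Type} [MeasurableSpace Ω]
    (η : ℝ → ℕ → Ω → Fin m) (ζ : ℝ → ℕ → Ω → Bool)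
    (Pstart : ℝ → Fin m → Measure Ω)
    (hprob : ∀ ε i, IsProbabilityMeasure (Pstart ε i))
    (hmeas : ∀ ε n, Measurable (η ε n) ∧ Measurable (ζ ε n))
    (R : ℝ → Fin m → Fin m → Bool → ℝ)
    (hMRP : ∀ ε ∈ Ioc (0:ℝ) ε₀, ∀ n : ℕ, ∀ I : ℕ → Fin m, ∀ Z : ℕ → Bool,
      Pstart ε (I 0) {ω | ∀ k ≤ n, (η ε k ω = I k ∧ (1 ≤ k → ζ ε k ω = Z k))}
        = ENNReal.ofReal (∏ k ∈ Finset.Icc 1 n, R ε (I (k - 1)) (I k) (Z k)))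
    (p : ℝ → Fin m → Fin m → ℝ)
    (hp : ∀ ε ∈ Ioc (0:ℝ) ε₀, ∀ i j, p ε i j = R ε i j false + R ε i j true)
    (hB : CondB p)
    (π : ℝ → Fin m → ℝ)
    (hπ : ∀ᶠ ε in 𝓝[>] (0:ℝ), IsStationaryDist (fun i j => p ε i j) (π ε))
    (hA1 : ∀ ε ∈ Ioc (0:ℝ) ε₀, ∃ i, 0 < rareP Pstart ζ ε i)
    (hA2 : ∀ i, Tendsto (fun ε => rareP Pstart ζ ε i) (𝓝[>] (0:ℝ)) (𝓝 0)) :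
    Tendsto (avgRare Pstart ζ π) (𝓝[>] (0:ℝ)) (𝓝 0) ∧
    ∃ (c : ℕ → Fin m) (L : ℕ) (a : ℝ), ∀ᶠ ε in 𝓝[>] (0:ℝ),
      Setup (η ε) (ζ ε) (Pstart ε) (R ε) c L a (π ε) (avgRare Pstart ζ π ε) := by
  have hr0 : ∀ ε i, 0 ≤ rareP Pstart ζ ε i := fun ε i => ENNReal.toReal_nonneg
  have hδt : Tendsto (avgRare Pstart ζ π) (𝓝[>] (0:ℝ)) (𝓝 0) := by
    have h1 : Tendsto (fun ε => ∑ i, rareP Pstart ζ ε i) (𝓝[>] (0:ℝ)) (𝓝 0) := by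
      have := tendsto_finset_sum (Finset.univ : Finset (Fin m)) (fun i _ => hA2 i)
      simpa using this
    refine tendsto_of_tendsto_of_tendsto_of_le_of_le' tendsto_const_nhds h1 ?_ ?_
    · filter_upwards [hπ] with ε h
      exact Finset.sum_nonneg (fun i _ => mul_nonneg (h.1 i) (hr0 ε i))
    · filter_upwards [hπ] with ε h
      refine Finset.sum_le_sum (fun i _ => ?_)
      have : π ε i ≤ 1 := by
        rw [← h.2.1]
        exact Finset.single_le_sum (fun i _ => h.1 i) (Finset.mem_univ i)
      nlinarith [hr0 ε i]
  refine ⟨hδt, ?_⟩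
  obtain ⟨c, L, a, ha, ha1, hc, hev⟩ := ring_exists p hB
  refine ⟨c, L, a, ?_⟩
  filter_upwards [hev, hπ, Ioc_mem_nhdsGT hε₀, hδt.eventually (gt_mem_nhds one_pos)]
    with ε h1 h2 h3 h4
  have hpe : (fun i j => p ε i j) = fun i j => R ε i j false + R ε i j true := by
    funext i j; exact hp ε h3 i j
  have hring : ∀ k, a ≤ R ε (c k) (c (k+1)) false + R ε (c k) (c (k+1)) true := by
    intro k; rw [← hp ε h3]; exact h1 k
  have hnn := R_nonneg (hMRP ε h3) hc (fun k => ha.trans_le (hring k))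
  have M : MRP (η ε) (ζ ε) (Pstart ε) (R ε) :=
    ⟨hprob ε, fun n => (hmeas ε n).1, fun n => (hmeas ε n).2, hnn, hMRP ε h3⟩
  rw [hpe] at h2
  have RM : RingMat c a (fun i j => R ε i j false + R ε i j true) :=
    ⟨fun i j => add_nonneg (hnn _ _ _) (hnn _ _ _), M.sum_one, hring⟩
  refine ⟨M, hc, ha, ha1, hring, h2, ?_, ?_, h4⟩
  · refine Finset.sum_congr rfl (fun i _ => ?_)
    rw [← M.kill_real i]; rfl
  · obtain ⟨i, hi⟩ := hA1 ε h3
    have hm : (0:ℝ) < m := by exact_mod_cast (Fin.pos i)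
    have hpi : 0 < π ε i := lt_of_lt_of_le (by positivity) (ring_pi hc ha ha1 RM _ h2 i)
    refine lt_of_lt_of_le (mul_pos hpi hi) ?_
    exact Finset.single_le_sum (f := fun i => π ε i * rareP Pstart ζ ε i)
      (fun i _ => mul_nonneg (h2.1 i) (hr0 ε i)) (Finset.mem_univ i)

lemma lap_tendsto {m : ℕ} {Ω : Type} [MeasurableSpace Ω] {l : Filter ℝ}
    {η : ℝ → ℕ → Ω → Fin m} {ζ : ℝ → ℕ → Ω → Bool} {P : ℝ → Fin m → Measure Ω}
    {R : ℝ → Fin m → Fin m → Bool → ℝ} {c : ℕ → Fin m} {L : ℕ} {a : ℝ} {π : ℝ → Fin m → ℝ}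
    {δ : ℝ → ℝ} (hδ : Tendsto δ l (𝓝 0))
    (S : ∀ᶠ ε in l, Setup (η ε) (ζ ε) (P ε) (R ε) c L a (π ε) (δ ε))
    (f : ℝ → Fin m → ℝ) (hf : ∀ᶠ ε in l, ∀ i, 0 ≤ f ε i)
    (φ : ℝ → ℝ) (hφ : ∀ᶠ ε in l, 0 < φ ε) (hfφ : ∀ᶠ ε in l, ∑ i, π ε i * f ε i = φ ε * δ ε)
    (s : ℝ) (hs : 0 < s) (i : Fin m) :
    Tendsto (fun ε => ∫ ω, Real.exp (-(s * (φ ε)⁻¹ * nuProc η ζ f ε 1 ω)) ∂(P ε i)) l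
      (𝓝 (1 / (1 + s))) := by
  have key : ∀ᶠ ε in l, Real.exp (- (s * δ ε / (a ^ L / m))) / (1 + s)
        - (L * (1 / a) ^ L) * ((s + 2) * δ ε / (a ^ L / m)) ≤
      ∫ ω, Real.exp (- Sacc (η ε) (ζ ε) (fun i => s * (φ ε)⁻¹ * f ε i) ω) ∂(P ε i) ∧
    ∫ ω, Real.exp (- Sacc (η ε) (ζ ε) (fun i => s * (φ ε)⁻¹ * f ε i) ω) ∂(P ε i) ≤
      Real.exp (s * δ ε / (a ^ L / m)) / (1 + s)
        + (L * (1 / a) ^ L) * ((s + 2) * δ ε / (a ^ L / m))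
        + (δ ε + (L * (1 / a) ^ L) * (2 * δ ε + δ ε / (a ^ L / m))) := by
    filter_upwards [S, hf, hφ, hfφ] with ε h1 h2 h3 h4
    refine h1.lap (fun i => s * (φ ε)⁻¹ * f ε i) (fun i => ?_) s hs ?_ i
    · have := h2 i
      positivity
    · have : ∑ i, π ε i * (s * (φ ε)⁻¹ * f ε i) = s * (φ ε)⁻¹ * ∑ i, π ε i * f ε i := by
        rw [Finset.mul_sum]; exact Finset.sum_congr rfl (fun i _ => by ring)
      rw [this, h4]
      field_simp
  have heq : ∀ ε ω, Sacc (η ε) (ζ ε) (fun i => s * (φ ε)⁻¹ * f ε i) ω =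
      s * (φ ε)⁻¹ * nuProc η ζ f ε 1 ω := by
    intro ε ω
    have : nuProc η ζ f ε 1 ω = Sacc (η ε) (ζ ε) (f ε) ω := Zt_one (f ε) ω
    rw [this, Sacc, Sacc, Finset.mul_sum]
  simp only [heq] at key
  refine tendsto_of_tendsto_of_tendsto_of_le_of_le' ?_ ?_ (key.mono fun _ h => h.1)
    (key.mono fun _ h => h.2)
  · have hcont : Continuous (fun d : ℝ => Real.exp (- (s * d / (a ^ L / m))) / (1 + s)
        - (L * (1 / a) ^ L) * ((s + 2) * d / (a ^ L / m))) := by fun_prop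
    have := (hcont.tendsto 0).comp hδ
    simpa [Function.comp_def] using this
  · have hcont : Continuous (fun d : ℝ => Real.exp (s * d / (a ^ L / m)) / (1 + s)
        + (L * (1 / a) ^ L) * ((s + 2) * d / (a ^ L / m))
        + (d + (L * (1 / a) ^ L) * (2 * d + d / (a ^ L / m)))) := by fun_prop
    have := (hcont.tendsto 0).comp hδ
    simpa [Function.comp_def] using this

lemma tail_tendsto {m : ℕ} {Ω : Type} [MeasurableSpace Ω] {l : Filter ℝ}
    {η : ℝ → ℕ → Ω → Fin m} {ζ : ℝ → ℕ → Ω → Bool} {P : ℝ → Fin m → Measure Ω}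
    {R : ℝ → Fin m → Fin m → Bool → ℝ} {c : ℕ → Fin m} {L : ℕ} {a : ℝ} {π : ℝ → Fin m → ℝ}
    {δ : ℝ → ℝ} (hδ : Tendsto δ l (𝓝 0))
    (S : ∀ᶠ ε in l, Setup (η ε) (ζ ε) (P ε) (R ε) c L a (π ε) (δ ε))
    (f : ℝ → Fin m → ℝ) (hf : ∀ᶠ ε in l, ∀ i, 0 ≤ f ε i)
    (φ : ℝ → ℝ) (hφ : ∀ᶠ ε in l, 0 < φ ε) (hfφ : ∀ᶠ ε in l, ∑ i, π ε i * f ε i = φ ε * δ ε)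
    (hφt : Tendsto φ l atTop)
    (t : ℝ) (ht : 0 < t) (x : ℝ) (i : Fin m) :
    Tendsto (fun ε => (P ε i {ω | nuProc η ζ f ε t ω ≤ x}).toReal) l (𝓝 0) := by
  rw [tendsto_order]
  refine ⟨fun b hb => Eventually.of_forall fun ε => lt_of_lt_of_le hb ENNReal.toReal_nonneg, ?_⟩
  intro τ hτ
  have hE := Real.exp_pos 1
  obtain ⟨y, hy, hyτ⟩ : ∃ y : ℝ, 0 < y ∧ Real.exp 1 * (1 / (1 + y)) < τ / 2 := by
    refine ⟨Real.exp 1 / (τ / 2), by positivity, ?_⟩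
    rw [mul_one_div, div_lt_iff₀ (by positivity), mul_add, mul_div_cancel₀ _ (by positivity)]
    linarith
  have ht1 : 0 < 1 + 1 / t := by positivity
  set A := 1 / (y * (1 + 1 / t)) with hA
  have hA0 : 0 < A := by positivity
  have hyA : y * (A * (1 + 1 / t)) = 1 := by rw [hA]; field_simp
  have hD : 0 < 1 - Real.exp (-A) := by
    have : Real.exp (-A) < 1 := by simp [hA0]
    linarith
  obtain ⟨s, hs, hsτ⟩ : ∃ s : ℝ, 0 < s ∧ (1 / s) / (1 - Real.exp (-A)) < τ / 2 := by
    refine ⟨4 / (τ * (1 - Real.exp (-A))), by positivity, ?_⟩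
    rw [one_div_div, div_lt_iff₀ hD]
    nlinarith [mul_pos hτ hD]
  have key : ∀ᶠ ε in l, (P ε i {ω | nuProc η ζ f ε t ω ≤ x}).toReal ≤
      Real.exp (y * (A * (1 + 1 / t))) * (Real.exp (y * δ ε / (a ^ L / m)) / (1 + y)
      + (L * (1 / a) ^ L) * ((y + 2) * δ ε / (a ^ L / m))
      + (δ ε + (L * (1 / a) ^ L) * (2 * δ ε + δ ε / (a ^ L / m))))
      + Real.exp (s * (φ ε)⁻¹ * x) * ((Real.exp (s * δ ε / (a ^ L / m)) / s
        + (L * (1 / a) ^ L) * (2 * δ ε + s * δ ε / (a ^ L / m) + δ ε / (a ^ L / m)))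
          / (1 - Real.exp (-A))) := by
    filter_upwards [S, hf, hφ, hfφ] with ε h1 h2 h3 h4
    exact h1.tail (f ε) h2 (φ ε) h3 h4 t ht x A y s hA0 hy hs i
  rw [hyA] at key
  have hφi : Tendsto (fun ε => (φ ε)⁻¹) l (𝓝 0) := tendsto_inv_atTop_zero.comp hφt
  have hcont : Continuous (fun d : ℝ × ℝ => Real.exp 1 * (Real.exp (y * d.1 / (a ^ L / m)) / (1 + y)
      + (L * (1 / a) ^ L) * ((y + 2) * d.1 / (a ^ L / m))
      + (d.1 + (L * (1 / a) ^ L) * (2 * d.1 + d.1 / (a ^ L / m))))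
      + Real.exp (s * d.2 * x) * ((Real.exp (s * d.1 / (a ^ L / m)) / s
        + (L * (1 / a) ^ L) * (2 * d.1 + s * d.1 / (a ^ L / m) + d.1 / (a ^ L / m)))
          / (1 - Real.exp (-A)))) := by fun_prop
  have hlim := (hcont.tendsto (0, 0)).comp (hδ.prodMk_nhds hφi)
  have hval := hlim.eventually_lt_const (u := τ) (by
    simp only [mul_zero, zero_div, Real.exp_zero, add_zero, zero_mul, one_mul]
    linarith)
  filter_upwards [key, hval] with ε h1 h2
  exact lt_of_le_of_lt h1 h2

lemma mix_integral {m : ℕ} {Ω : Type} [MeasurableSpace Ω] (P : Fin m → Measure Ω)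
    [∀ i, IsProbabilityMeasure (P i)] (q : Fin m → ℝ) (hq : ∀ i, 0 ≤ q i) (g : Ω → ℝ)
    (hg : Measurable g) (hg0 : ∀ ω, 0 ≤ g ω) (hg1 : ∀ ω, g ω ≤ 1) :
    ∫ ω, g ω ∂(∑ i, ENNReal.ofReal (q i) • P i) = ∑ i, q i * ∫ ω, g ω ∂(P i) := by
  rw [integral_finsetSum_measure]
  · refine Finset.sum_congr rfl (fun i _ => ?_)
    rw [integral_smul_measure, ENNReal.toReal_ofReal (hq i), smul_eq_mul]
  · intro i _
    refine Integrable.smul_measure ?_ ENNReal.ofReal_ne_top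
    exact Integrable.of_bound hg.aestronglyMeasurable 1
      (Eventually.of_forall fun ω => by rw [Real.norm_of_nonneg (hg0 ω)]; exact hg1 ω)

lemma mix_prob {m : ℕ} {Ω : Type} [MeasurableSpace Ω] (P : Fin m → Measure Ω)
    [∀ i, IsProbabilityMeasure (P i)] (q : Fin m → ℝ) (hq : ∀ i, 0 ≤ q i) (E : Set Ω) :
    ((∑ i, ENNReal.ofReal (q i) • P i) E).toReal = ∑ i, q i * (P i E).toReal := by
  rw [Measure.finsetSum_apply, ENNReal.toReal_sum]
  · refine Finset.sum_congr rfl (fun i _ => ?_)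
    rw [Measure.smul_apply, smul_eq_mul, ENNReal.toReal_mul, ENNReal.toReal_ofReal (hq i)]
  · intro i _
    rw [Measure.smul_apply, smul_eq_mul]
    exact ENNReal.mul_ne_top ENNReal.ofReal_ne_top (measure_ne_top _ _)

lemma lim_inj (y z : ℝ≥0∞)
    (h : ((1 + ENNReal.ofReal 1 * y)⁻¹).toReal = ((1 + ENNReal.ofReal 1 * z)⁻¹).toReal) :
    y = z := by
  simp only [ENNReal.ofReal_one, one_mul] at h
  rw [ENNReal.toReal_eq_toReal_iff' (by simp) (by simp), inv_inj,
    ENNReal.add_right_inj ENNReal.one_ne_top] at h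
  exact h

lemma necess {l : Filter ℝ} [NeBot l] (φ : ℝ → ℝ≥0∞) (y : ℝ)
    (h : ∀ U : Ultrafilter ℝ, (U : Filter ℝ) ≤ l → ∀ z, Tendsto φ U (𝓝 z) →
      y = ((1 + ENNReal.ofReal 1 * z)⁻¹).toReal) :
    ∃ z, Tendsto φ l (𝓝 z) := by
  have hex : ∀ U : Ultrafilter ℝ, ∃ z, Tendsto φ U (𝓝 z) := fun U =>
    ⟨(U.map φ).lim, (U.map φ).le_nhds_lim⟩
  obtain ⟨z0, hz0⟩ := hex (Ultrafilter.of l)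
  refine ⟨z0, ?_⟩
  rw [tendsto_iff_ultrafilter]
  intro U hU
  obtain ⟨z, hz⟩ := hex U
  have := lim_inj z z0 ((h U hU z hz).symm.trans (h _ (Ultrafilter.of_le l) z0 hz0))
  rw [← this]; exact hz

/-- Lemma 8: under conditions A, B and H:
(i) `f_ε⁻¹ ν_ε(1)` converges in distribution to an exponential random variable `ν₀` with
parameter 1;
(ii) condition I (`f_ε → f₀ ∈ [0,∞]`) is necessary and sufficient for convergence in
distribution (with possibly improper limit) of `ν_ε(1)`, the limit being distributed as
`f₀ ν₀`;
(iii) if `f₀ = ∞` then `ν_ε(t) → ∞` in probability for every `t > 0`. -/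
theorem stmt15 {m : ℕ} (hm : 0 < m) (ε₀ : ℝ) (hε₀ : 0 < ε₀)
    {Ω : Type} [MeasurableSpace Ω]
    (η : ℝ → ℕ → Ω → Fin m) (ζ : ℝ → ℕ → Ω → Bool)
    (Pstart : ℝ → Fin m → Measure Ω)
    (hprob : ∀ ε i, IsProbabilityMeasure (Pstart ε i))
    (hmeas : ∀ ε n, Measurable (η ε n) ∧ Measurable (ζ ε n))
    (R : ℝ → Fin m → Fin m → Bool → ℝ)
    (hMRP : ∀ ε ∈ Ioc (0:ℝ) ε₀, ∀ n : ℕ, ∀ I : ℕ → Fin m, ∀ Z : ℕ → Bool,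
      Pstart ε (I 0) {ω | ∀ k ≤ n, (η ε k ω = I k ∧ (1 ≤ k → ζ ε k ω = Z k))}
        = ENNReal.ofReal (∏ k ∈ Finset.Icc 1 n, R ε (I (k - 1)) (I k) (Z k)))
    (p : ℝ → Fin m → Fin m → ℝ)
    (hp : ∀ ε ∈ Ioc (0:ℝ) ε₀, ∀ i j, p ε i j = R ε i j false + R ε i j true)
    (hB : CondB p)
    (π : ℝ → Fin m → ℝ)
    (hπ : ∀ᶠ ε in 𝓝[>] (0:ℝ), IsStationaryDist (fun i j => p ε i j) (π ε))
    -- condition A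
    (hA1 : ∀ ε ∈ Ioc (0:ℝ) ε₀, ∃ i, 0 < rareP Pstart ζ ε i)
    (hA2 : ∀ i, Tendsto (fun ε => rareP Pstart ζ ε i) (𝓝[>] (0:ℝ)) (𝓝 0))
    -- arbitrary family of initial distributions
    (q : ℝ → Fin m → ℝ) (Pq : ℝ → Measure Ω)
    (hq : ∀ ε ∈ Ioc (0:ℝ) ε₀, (∀ i, 0 ≤ q ε i) ∧ ∑ i, q ε i = 1)
    (hmix : ∀ ε ∈ Ioc (0:ℝ) ε₀, Pq ε = ∑ i, ENNReal.ofReal (q ε i) • Pstart ε i)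
    -- nonrandom nonnegative rewards f_{ε,i}
    (f : ℝ → Fin m → ℝ) (hf : ∀ ε ∈ Ioc (0:ℝ) ε₀, ∀ i, 0 ≤ f ε i)
    -- condition H
    (hH : ∀ᶠ ε in 𝓝[>] (0:ℝ), 0 < fBarNu Pstart ζ π f ε) :
    -- (i) f_ε⁻¹ ν_ε(1) converges in distribution to an exponential law with parameter 1
    (∀ s > 0, Tendsto
      (fun ε => ∫ ω, Real.exp (-(s * (fBarNu Pstart ζ π f ε)⁻¹ * nuProc η ζ f ε 1 ω)) ∂(Pq ε))
      (𝓝[>] (0:ℝ)) (𝓝 (1 / (1 + s)))) ∧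
    -- (ii) condition I is necessary and sufficient for convergence in distribution
    -- (with possibly improper limit) of ν_ε(1)
    ((∃ f₀ : ℝ≥0∞,
        Tendsto (fun ε => ENNReal.ofReal (fBarNu Pstart ζ π f ε)) (𝓝[>] (0:ℝ)) (𝓝 f₀)) ↔
      (∃ L : ℝ → ℝ, ∀ s > 0,
        Tendsto (fun ε => ∫ ω, Real.exp (-(s * nuProc η ζ f ε 1 ω)) ∂(Pq ε))
          (𝓝[>] (0:ℝ)) (𝓝 (L s)))) ∧
    ∀ f₀ : ℝ≥0∞,
      Tendsto (fun ε => ENNReal.ofReal (fBarNu Pstart ζ π f ε)) (𝓝[>] (0:ℝ)) (𝓝 f₀) →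
      -- in this case the limit is distributed as f₀ ν₀
      (∀ s > 0, Tendsto (fun ε => ∫ ω, Real.exp (-(s * nuProc η ζ f ε 1 ω)) ∂(Pq ε))
        (𝓝[>] (0:ℝ)) (𝓝 (((1 + ENNReal.ofReal s * f₀)⁻¹).toReal))) ∧
      -- (iii) if f₀ = ∞ then ν_ε(t) → ∞ in probability for every t > 0
      (f₀ = ⊤ → ∀ t > (0:ℝ), ∀ c : ℝ,
        Tendsto (fun ε => (Pq ε {ω | nuProc η ζ f ε t ω ≤ c}).toReal)
          (𝓝[>] (0:ℝ)) (𝓝 0)) := by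
  obtain ⟨hδt, cc, L, a, hS⟩ := setup_eventually ε₀ hε₀ η ζ Pstart hprob hmeas R hMRP p hp hB π hπ
    hA1 hA2
  have hI := Ioc_mem_nhdsGT hε₀
  have hfev : ∀ᶠ ε in 𝓝[>] (0:ℝ), ∀ i, 0 ≤ f ε i := by
    filter_upwards [hI] with ε h using hf ε h
  have hqev : ∀ᶠ ε in 𝓝[>] (0:ℝ), (∀ i, 0 ≤ q ε i) ∧ ∑ i, q ε i = 1 := by
    filter_upwards [hI] with ε h using hq ε h
  have hfφ : ∀ᶠ ε in 𝓝[>] (0:ℝ),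
      ∑ i, π ε i * f ε i = fBarNu Pstart ζ π f ε * avgRare Pstart ζ π ε := by
    filter_upwards [hS] with ε h
    have := h.hδ0.ne'
    unfold fBarNu
    field_simp
  have hnu : ∀ ε ω, nuProc η ζ f ε 1 ω = Sacc (η ε) (ζ ε) (f ε) ω := fun ε ω => Zt_one (f ε) ω
  have hnu0 : ∀ᶠ ε in 𝓝[>] (0:ℝ), ∀ ω, 0 ≤ nuProc η ζ f ε 1 ω := by
    filter_upwards [hfev] with ε h ω
    rw [hnu]
    exact Sacc_nonneg _ h ω
  have hmeasN : ∀ᶠ ε in 𝓝[>] (0:ℝ), Measurable (nuProc η ζ f ε 1) := by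
    filter_upwards [hS] with ε h
    have h1 := h.mrp.meas_S (f ε)
    have h2 : nuProc η ζ f ε 1 = Sacc (η ε) (ζ ε) (f ε) := funext (hnu ε)
    rwa [h2]
  -- integrals against the mixture
  have hmixI : ∀ᶠ ε in 𝓝[>] (0:ℝ), ∀ s > 0,
      ∫ ω, Real.exp (-(s * (fBarNu Pstart ζ π f ε)⁻¹ * nuProc η ζ f ε 1 ω)) ∂(Pq ε) =
      ∑ i, q ε i * ∫ ω, Real.exp (-(s * (fBarNu Pstart ζ π f ε)⁻¹ * nuProc η ζ f ε 1 ω))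
        ∂(Pstart ε i) := by
    filter_upwards [hI, hqev, hnu0, hmeasN, hH] with ε h1 h2 h3 h4 h5 s hs
    rw [hmix ε h1]
    refine mix_integral (Pstart ε) (q ε) h2.1 _ ?_ (fun ω => (Real.exp_pos _).le) (fun ω => ?_)
    · exact Real.measurable_exp.comp ((h4.const_mul _).neg)
    · rw [Real.exp_le_one_iff]
      have := h3 ω
      have : 0 ≤ s * (fBarNu Pstart ζ π f ε)⁻¹ * nuProc η ζ f ε 1 ω := by positivity
      linarith
  have part1 : ∀ s > 0, Tendsto
      (fun ε => ∫ ω, Real.exp (-(s * (fBarNu Pstart ζ π f ε)⁻¹ * nuProc η ζ f ε 1 ω)) ∂(Pq ε))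
      (𝓝[>] (0:ℝ)) (𝓝 (1 / (1 + s))) := by
    intro s hs
    refine (mix_tendsto q _ _ hqev
      (fun i => lap_tendsto hδt hS f hfev _ hH hfφ s hs i)).congr' ?_
    filter_upwards [hmixI] with ε h using (h s hs).symm
  have hPq : ∀ᶠ ε in 𝓝[>] (0:ℝ), IsProbabilityMeasure (Pq ε) := by
    filter_upwards [hI, hqev] with ε h1 h2
    refine ⟨?_⟩
    rw [hmix ε h1, Measure.finsetSum_apply]
    simp only [Measure.smul_apply, measure_univ, smul_eq_mul, mul_one]
    rw [← ENNReal.ofReal_sum_of_nonneg (fun i _ => h2.1 i), h2.2, ENNReal.ofReal_one]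
  set G : ℝ → ℝ → ℝ := fun ε s =>
    ∫ ω, Real.exp (-(s * (fBarNu Pstart ζ π f ε)⁻¹ * nuProc η ζ f ε 1 ω)) ∂(Pq ε) with hG
  have hGint : ∀ᶠ ε in 𝓝[>] (0:ℝ), ∀ s > 0, Integrable
      (fun ω => Real.exp (-(s * (fBarNu Pstart ζ π f ε)⁻¹ * nuProc η ζ f ε 1 ω))) (Pq ε) ∧
      ∀ ω, Real.exp (-(s * (fBarNu Pstart ζ π f ε)⁻¹ * nuProc η ζ f ε 1 ω)) ≤ 1 := by
    filter_upwards [hPq, hnu0, hmeasN, hH] with ε h1 h3 h4 h5 s hs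
    have hle : ∀ ω, Real.exp (-(s * (fBarNu Pstart ζ π f ε)⁻¹ * nuProc η ζ f ε 1 ω)) ≤ 1 := by
      intro ω
      rw [Real.exp_le_one_iff]
      have := h3 ω
      have : 0 ≤ s * (fBarNu Pstart ζ π f ε)⁻¹ * nuProc η ζ f ε 1 ω := by positivity
      linarith
    refine ⟨?_, hle⟩
    refine Integrable.of_bound
      (Real.measurable_exp.comp ((h4.const_mul _).neg)).aestronglyMeasurable 1
      (Eventually.of_forall fun ω => ?_)
    rw [Real.norm_of_nonneg (Real.exp_pos _).le]
    exact hle ω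
  have hanti : ∀ᶠ ε in 𝓝[>] (0:ℝ), ∀ s s', 0 < s → s ≤ s' → G ε s' ≤ G ε s := by
    filter_upwards [hGint, hnu0, hH] with ε h1 h2 h3 s s' hs hss
    refine integral_mono (h1 s' (hs.trans_le hss)).1 (h1 s hs).1 (fun ω => ?_)
    refine Real.exp_le_exp.2 (neg_le_neg ?_)
    have := h2 ω
    gcongr
  have h0 : ∀ᶠ ε in 𝓝[>] (0:ℝ), ∀ s > 0, 0 ≤ G ε s ∧ G ε s ≤ 1 := by
    filter_upwards [hGint, hPq] with ε h1 h2 s hs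
    refine ⟨integral_nonneg (fun ω => (Real.exp_pos _).le), ?_⟩
    refine (integral_mono (h1 s hs).1 (integrable_const (1:ℝ)) (h1 s hs).2).trans ?_
    simp
  have hGs : ∀ᶠ ε in 𝓝[>] (0:ℝ), ∀ s, G ε (s * fBarNu Pstart ζ π f ε) =
      ∫ ω, Real.exp (-(s * nuProc η ζ f ε 1 ω)) ∂(Pq ε) := by
    filter_upwards [hH] with ε h s
    simp only [hG]
    rw [mul_assoc s, mul_inv_cancel₀ h.ne', mul_one]
  have conv : ∀ l : Filter ℝ, l ≤ 𝓝[>] (0:ℝ) → ∀ f₀ : ℝ≥0∞,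
      Tendsto (fun ε => ENNReal.ofReal (fBarNu Pstart ζ π f ε)) l (𝓝 f₀) →
      ∀ s > 0, Tendsto (fun ε => ∫ ω, Real.exp (-(s * nuProc η ζ f ε 1 ω)) ∂(Pq ε))
        l (𝓝 (((1 + ENNReal.ofReal s * f₀)⁻¹).toReal)) := by
    intro l hl f₀ hf₀ s hs
    refine (gconv G _ f₀ (hH.filter_mono hl) (hanti.filter_mono hl) (h0.filter_mono hl)
      (fun s hs => (part1 s hs).mono_left hl) hf₀ s hs).congr' ?_
    filter_upwards [hGs.filter_mono hl] with ε h using h s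
  refine ⟨part1, ⟨?_, ?_⟩, ?_⟩
  · rintro ⟨f₀, hf₀⟩
    exact ⟨fun s => ((1 + ENNReal.ofReal s * f₀)⁻¹).toReal, conv _ le_rfl f₀ hf₀⟩
  · rintro ⟨Lf, hLf⟩
    refine necess _ (Lf 1) ?_
    intro U hU z hz
    exact tendsto_nhds_unique ((hLf 1 one_pos).mono_left hU) (conv U hU z hz 1 one_pos)
  · intro f₀ hf₀
    refine ⟨conv _ le_rfl f₀ hf₀, ?_⟩
    intro htop t ht x
    rw [htop, ENNReal.tendsto_ofReal_nhds_top] at hf₀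
    refine (mix_tendsto q _ _ hqev
      (fun i => tail_tendsto hδt hS f hfev _ hH hfφ hf₀ t ht x i)).congr' ?_
    filter_upwards [hI, hqev] with ε h1 h2
    rw [hmix ε h1, mix_prob (Pstart ε) (q ε) h2.1]
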